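/- Let θ ∈ (0, 1/2] be such that θ⁻¹ ≥ 2 is an integer, let n ≥ 2 be an integer, and let U : S_{T[θ,S_n]} → S_{T[θ,S_n]} be a surjective isometry of the unit sphere of T[θ, S_n]. Then there exists a sequence (ε_i)_{i=1}^∞ with values in {−1, 1} such that for every x ∈ S_{T[θ,S_n]} with basis expansion x = Σ_{i=1}^∞ a_i e_i one has U(x) = Σ_{i=1}^∞ ε_i a_i e_i. -/

import Mathlib

open scoped BigOperators

noncomputable section

/-- Projection of a finitely supported vector onto the coordinates in `E`. -/
def tsProj (E : Finset ℕ+) (x : ℕ+ →₀ ℝ) : ℕ+ →₀ ℝ :=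
  x.filter fun i => i ∈ E

/-- The Schreier families `S_n` on the positive integers:
`S₁` consists of the sets `F` with `|F| ≤ min F` (together with `∅`), and `S_{n+1}`
consists of unions `F₁ ∪ ⋯ ∪ F_d` of nonempty members `F₁ < ⋯ < F_d` of `S_n`
with `d ≤ min F₁` (together with `∅`). -/
def Schreier : ℕ → Set (Finset ℕ+)
  | 0 => {F | F.card ≤ 1}
  | 1 => {F | ∀ a ∈ F, F.card ≤ (a : ℕ)}
  | n + 2 =>
      {F | F = ∅ ∨
        ∃ (d : ℕ) (G : Fin d → Finset ℕ+),
          0 < d ∧ (∀ i, G i ∈ Schreier (n + 1)) ∧ (∀ i, (G i).Nonempty) ∧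
          (∀ i j : Fin d, i < j → ∀ a ∈ G i, ∀ b ∈ G j, a < b) ∧
          (∀ i, ∀ a ∈ G i, d ≤ (a : ℕ)) ∧ F = Finset.univ.biUnion G}

/-- A tuple of nonempty finite sets `E 0 < E 1 < ⋯` whose set of minima belongs to `S`. -/
def TsAdmissible (S : Set (Finset ℕ+)) {d : ℕ} (E : Fin d → Finset ℕ+) : Prop :=
  (∀ i, (E i).Nonempty) ∧
  (∀ i j : Fin d, i < j → ∀ a ∈ E i, ∀ b ∈ E j, a < b) ∧
  ∃ μ : Fin d → ℕ+, (∀ i, IsLeast (↑(E i) : Set ℕ+) (μ i)) ∧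
    Finset.univ.image μ ∈ S

/-- The iterated norms `‖·‖_m` in the construction of the Tsirelson norm:
`‖x‖₀` is the supremum norm and
`‖x‖_{m+1} = max(‖x‖_m, sup{θ ∑ᵢ ‖Eᵢ x‖_m : E₁ < ⋯ < E_d, {min Eᵢ} ∈ S})`. -/
def tnormAux (θ : ℝ) (S : Set (Finset ℕ+)) : ℕ → (ℕ+ →₀ ℝ) → ℝ
  | 0, x => ⨆ i, |x i|
  | m + 1, x =>
      max (tnormAux θ S m x)
        (sSup {r : ℝ | ∃ (d : ℕ) (E : Fin d → Finset ℕ+), TsAdmissible S E ∧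
          r = θ * ∑ i, tnormAux θ S m (tsProj (E i) x)})

/-- The Tsirelson norm `‖x‖_{θ,S} = sup_m ‖x‖_m` on `c₀₀`. -/
def tnorm (θ : ℝ) (S : Set (Finset ℕ+)) (x : ℕ+ →₀ ℝ) : ℝ :=
  ⨆ m : ℕ, tnormAux θ S m x

/-- `X`, together with the sequence `e` of unit vectors, is (a realization of) the
Tsirelson space `T[θ, S_n]`: a Banach space containing `c₀₀` isometrically
(w.r.t. the Tsirelson norm) as a dense subspace, in which `(e i)` is a
(1-unconditional) basis, i.e. every `x` has a unique expansion `x = ∑ᵢ aᵢ eᵢ`. -/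
structure IsTsirelsonSpace (θ : ℝ) (n : ℕ) (X : Type*) [NormedAddCommGroup X]
    [NormedSpace ℝ X] (e : ℕ+ → X) : Prop where
  complete : CompleteSpace X
  norm_embed : ∀ a : ℕ+ →₀ ℝ, ‖a.sum fun i c => c • e i‖ = tnorm θ (Schreier n) a
  dense_embed : DenseRange fun a : ℕ+ →₀ ℝ => a.sum fun i c => c • e i
  expansion : ∀ x : X, ∃! a : ℕ+ → ℝ, HasSum (fun i => a i • e i) x


/-! Combinatorics of Schreier families -/

theorem sch_empty (n : ℕ) : (∅ : Finset ℕ+) ∈ Schreier n := by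
  match n with
  | 0 => simp [Schreier]
  | 1 => simp [Schreier]
  | n + 2 => simp [Schreier]

theorem sch_succ_iff (n : ℕ) (F : Finset ℕ+) : F ∈ Schreier (n + 2) ↔
    ∃ (d : ℕ) (t : ℕ+ → ℕ), (∀ a ∈ F, ∀ b ∈ F, a ≤ b → t a ≤ t b) ∧ (∀ a ∈ F, t a < d) ∧
      (∀ a ∈ F, d ≤ (a : ℕ)) ∧ ∀ i, F.filter (fun a => t a = i) ∈ Schreier (n + 1) := by
  constructor
  · intro h
    simp only [Schreier, Set.mem_ofPred_eq] at h
    rcases h with rfl | ⟨d, G, hd, hG, hne, hlt, hmin, rfl⟩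
    · exact ⟨0, fun _ => 0, by simp, by simp, by simp, by simp [sch_empty]⟩
    · classical
      have hex : ∀ a : ℕ+, ∃ i : ℕ, ∀ j : Fin d, a ∈ G j → i = j := by
        intro a
        by_cases h : ∃ j, a ∈ G j
        · obtain ⟨j, hj⟩ := h
          refine ⟨j, fun l hl => ?_⟩
          rcases lt_trichotomy j l with h | h | h
          · exact absurd (hlt _ _ h a hj a hl) (lt_irrefl _)
          · rw [h]
          · exact absurd (hlt _ _ h a hl a hj) (lt_irrefl _)
        · push Not at h
          exact ⟨0, fun j hj => absurd hj (h j)⟩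
      choose t ht using hex
      refine ⟨d, t, ?_, ?_, ?_, ?_⟩
      · intro a ha b hb hab
        simp only [Finset.mem_biUnion, Finset.mem_univ, true_and] at ha hb
        obtain ⟨i, hi⟩ := ha
        obtain ⟨j, hj⟩ := hb
        rw [ht a i hi, ht b j hj]
        by_contra hc
        have : j < i := by rw [Fin.lt_def]; omega
        exact absurd (hlt _ _ this b hj a hi) (not_lt.mpr hab)
      · intro a ha
        simp only [Finset.mem_biUnion, Finset.mem_univ, true_and] at ha
        obtain ⟨i, hi⟩ := ha
        rw [ht a i hi]; exact i.2
      · intro a ha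
        simp only [Finset.mem_biUnion, Finset.mem_univ, true_and] at ha
        obtain ⟨i, hi⟩ := ha
        exact hmin i a hi
      · intro i
        by_cases hi : i < d
        · convert hG ⟨i, hi⟩ using 1
          ext a
          simp only [Finset.mem_filter, Finset.mem_biUnion, Finset.mem_univ, true_and]
          constructor
          · rintro ⟨⟨j, hj⟩, h⟩
            have := ht a j hj
            have : j = ⟨i, hi⟩ := by ext; simp; omega
            rw [← this]; exact hj
          · intro h
            exact ⟨⟨_, h⟩, ht a _ h⟩
        · convert sch_empty (n+1)
          ext a
          simp only [Finset.mem_filter, Finset.mem_biUnion, Finset.mem_univ, true_and]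
          constructor
          · rintro ⟨⟨j, hj⟩, h⟩
            have := ht a j hj
            omega
          · intro h; simp at h
  · rintro ⟨d, t, hm, hd, hmin, hf⟩
    simp only [Schreier, Set.mem_ofPred_eq]
    by_cases hF : F = ∅
    · exact Or.inl hF
    right
    classical
    set I := F.image t with hI
    have hIne : I.Nonempty := by
      rw [hI, Finset.image_nonempty]; exact Finset.nonempty_iff_ne_empty.mpr hF
    refine ⟨I.card, fun i => F.filter (fun a => t a = I.orderEmbOfFin rfl i), ?_, ?_, ?_, ?_, ?_, ?_⟩
    · exact Finset.card_pos.mpr hIne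
    · intro i; exact hf _
    · intro i
      have := Finset.orderEmbOfFin_mem I rfl i
      obtain ⟨a, ha, h⟩ := Finset.mem_image.mp this
      exact ⟨a, by simp [ha]; exact h⟩
    · intro i j hij a ha b hb
      simp only [Finset.mem_filter] at ha hb
      by_contra hc
      have h1 := hm b hb.1 a ha.1 (not_lt.mp hc)
      have h2 : I.orderEmbOfFin rfl i < I.orderEmbOfFin rfl j := (I.orderEmbOfFin rfl).lt_iff_lt.mpr hij
      omega
    · intro i a ha
      simp only [Finset.mem_filter] at ha
      refine le_trans ?_ (hmin a ha.1)
      have : I ⊆ Finset.range d := by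
        intro x hx
        rw [hI, Finset.mem_image] at hx
        obtain ⟨a, ha, rfl⟩ := hx
        simpa using hd a ha
      simpa using Finset.card_le_card this
    · ext a
      simp only [Finset.mem_biUnion, Finset.mem_univ, true_and, Finset.mem_filter]
      constructor
      · intro ha
        have : t a ∈ I := Finset.mem_image_of_mem _ ha
        have h2 : t a ∈ Set.range (I.orderEmbOfFin rfl) := by
          rw [Finset.range_orderEmbOfFin]; exact this
        obtain ⟨i, hi⟩ := h2
        exact ⟨i, ha, hi.symm⟩
      · rintro ⟨_, h, _⟩; exact h

/-- hereditary + spreading -/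
theorem sch_spread (n : ℕ) : ∀ (F G : Finset ℕ+) (φ : ℕ+ → ℕ+), F ∈ Schreier (n + 1) →
    (∀ g ∈ G, φ g ∈ F) → (∀ g ∈ G, ∀ g' ∈ G, g < g' → φ g < φ g') → (∀ g ∈ G, φ g ≤ g) →
    G ∈ Schreier (n + 1) := by
  induction n with
  | zero =>
    intro F G φ hF h1 h2 h3
    simp only [Schreier, Set.mem_ofPred_eq] at hF ⊢
    intro a ha
    have hc : G.card ≤ F.card := by
      apply Finset.card_le_card_of_injOn φ h1
      intro x hx y hy hxy
      rcases lt_trichotomy x y with h | h | h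
      · exact absurd hxy (h2 x hx y hy h).ne
      · exact h
      · exact absurd hxy (h2 y hy x hx h).ne'
    have := hF _ (h1 a ha)
    have h4 : (φ a : ℕ) ≤ a := by exact_mod_cast h3 a ha
    omega
  | succ n ih =>
    intro F G φ hF h1 h2 h3
    rw [sch_succ_iff] at hF ⊢
    obtain ⟨d, t, hm, hd, hmin, hf⟩ := hF
    have h2' : ∀ a ∈ G, ∀ b ∈ G, a ≤ b → φ a ≤ φ b := by
      intro a ha b hb hab
      rcases hab.eq_or_lt with h | h
      · rw [h]
      · exact (h2 a ha b hb h).le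
    refine ⟨d, fun a => t (φ a), ?_, ?_, ?_, ?_⟩
    · intro a ha b hb hab
      exact hm _ (h1 a ha) _ (h1 b hb) (h2' a ha b hb hab)
    · intro a ha; exact hd _ (h1 a ha)
    · intro a ha
      have h4 : (φ a : ℕ) ≤ a := by exact_mod_cast h3 a ha
      exact (hmin _ (h1 a ha)).trans h4
    · intro i
      apply ih _ _ φ (hf i)
      · intro g hg
        simp only [Finset.mem_filter] at hg ⊢
        exact ⟨h1 g hg.1, hg.2⟩
      · intro g hg g' hg'
        simp only [Finset.mem_filter] at hg hg'
        exact h2 g hg.1 g' hg'.1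
      · intro g hg
        simp only [Finset.mem_filter] at hg
        exact h3 g hg.1

theorem sch_subset (n : ℕ) (F G : Finset ℕ+) (hF : F ∈ Schreier (n + 1)) (h : G ⊆ F) :
    G ∈ Schreier (n + 1) :=
  sch_spread n F G id hF (fun _ hg => h hg) (fun _ _ _ _ h => h) (fun _ _ => le_rfl)

theorem sch_one_le (n : ℕ) (F : Finset ℕ+) (h : ∀ a ∈ F, F.card ≤ (a : ℕ)) :
    F ∈ Schreier (n + 1) := by
  induction n with
  | zero => simpa [Schreier] using h
  | succ n ih =>
    rw [sch_succ_iff]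
    refine ⟨1, fun _ => 0, by simp, by simp, fun a _ => a.pos, ?_⟩
    intro i
    exact sch_subset n F _ ih (Finset.filter_subset _ _)

theorem sch_singleton (n : ℕ) (a : ℕ+) : {a} ∈ Schreier (n + 1) := by
  apply sch_one_le
  intro b hb
  rw [Finset.card_singleton]; exact b.pos

theorem sch_mem_one (n : ℕ) (F : Finset ℕ+) (hF : F ∈ Schreier (n + 1)) (h1 : 1 ∈ F) :
    F = {1} := by
  induction n generalizing F with
  | zero =>
    simp only [Schreier, Set.mem_ofPred_eq] at hF
    have := hF 1 h1
    have hc : F.card = 1 := by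
      have h2 : 0 < F.card := Finset.card_pos.mpr ⟨1, h1⟩
      have h3 : ((1:ℕ+):ℕ) = 1 := rfl
      omega
    obtain ⟨a, rfl⟩ := Finset.card_eq_one.mp hc
    simp at h1
    simp [h1]
  | succ n ih =>
    rw [sch_succ_iff] at hF
    obtain ⟨d, t, hm, hd, hmin, hf⟩ := hF
    have h0 := hmin 1 h1
    have : F.filter (fun a => t a = 0) = F := by
      apply Finset.filter_true_of_mem
      intro a ha
      have := hd a ha
      simp at h0; omega
    apply ih _ _ h1
    rw [← this]; exact hf 0

/-- one far block may be appended after a single first element -/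
theorem sch_cons (n : ℕ) (hn : 2 ≤ n) (j : ℕ+) (hj : 2 ≤ j) (B : Finset ℕ+)
    (hB : ∀ b ∈ B, j < b) (hc : ∀ b ∈ B, B.card ≤ (b : ℕ)) : insert j B ∈ Schreier n := by
  obtain ⟨n, rfl⟩ : ∃ m, n = m + 2 := ⟨n - 2, by omega⟩
  rw [sch_succ_iff]
  refine ⟨2, fun a => if a ≤ j then 0 else 1, ?_, ?_, ?_, ?_⟩
  · intro a _ b _ hab
    by_cases h : b ≤ j
    · simp [h, hab.trans h]
    · simp only [h, if_false]; split_ifs <;> omega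
  · intro a _; dsimp only; split_ifs <;> omega
  · intro a ha
    rcases Finset.mem_insert.mp ha with rfl | h
    · exact_mod_cast hj
    · have h1 : (2:ℕ+) ≤ a := hj.trans (hB a h).le
      exact_mod_cast h1
  · intro i
    have hBB : B ∈ Schreier (n+1) := sch_one_le n B hc
    by_cases hi : i = 0
    · apply sch_subset n {j} _ (sch_singleton n j)
      intro a ha
      simp only [Finset.mem_filter, Finset.mem_insert] at ha
      rcases ha with ⟨h | h, h2⟩
      · simp [h]
      · have := hB a h
        simp [not_le.mpr this, hi] at h2
    · apply sch_subset n B _ hBB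
      intro a ha
      simp only [Finset.mem_filter, Finset.mem_insert] at ha
      rcases ha with ⟨h | h, h2⟩
      · simp [h] at h2; omega
      · exact h

theorem sch_no_inf (n : ℕ) (c : ℕ → ℕ+) (hc : StrictMono c) :
    ∀ p, ∃ q, p < q ∧ (Finset.Ico p q).image c ∉ Schreier (n + 1) := by
  induction n with
  | zero =>
    intro p
    refine ⟨p + c p + 1, by omega, ?_⟩
    simp only [Schreier, Set.mem_ofPred_eq]
    intro h
    have := h (c p) (Finset.mem_image_of_mem _ (by simp))
    rw [Finset.card_image_of_injective _ hc.injective] at this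
    simp at this
    omega
  | succ n ih =>
    intro p
    choose nx hnx hnx2 using ih
    let P : ℕ → ℕ := fun a => nx^[a] p
    have hP : ∀ a, P (a+1) = nx (P a) := fun a => Function.iterate_succ_apply' _ _ _
    have hPm : StrictMono P := strictMono_nat_of_lt_succ (fun a => by rw [hP]; exact hnx _)
    have hP0 : P 0 = p := rfl
    refine ⟨P (c p + 1), by rw [← hP0]; apply hPm; omega, ?_⟩
    rw [sch_succ_iff]
    rintro ⟨d, t, hm, hd, hmin, hf⟩
    have hmem : ∀ r, p ≤ r → r < P (c p + 1) → c r ∈ (Finset.Ico p (P (c p + 1))).image c :=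
      fun r h1 h2 => Finset.mem_image_of_mem _ (by simp [h1, h2])
    have hPp : ∀ a, p ≤ P a := fun a => by rw [← hP0]; exact hPm.monotone (Nat.zero_le _)
    have key : ∀ a : ℕ, a ≤ (c p : ℕ) → a ≤ t (c (P a)) := by
      intro a
      induction a with
      | zero => intro _; omega
      | succ a iha =>
        intro ha
        have h1 := iha (by omega)
        have m1 := hmem (P a) (hPp a) (hPm (by omega))
        have m2 := hmem (P (a+1)) (hPp _) (hPm (by omega))
        have h2 := hm _ m1 _ m2 (hc.monotone (hPm (by omega : a < a+1)).le)
        by_contra hcon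
        have heq : t (c (P (a+1))) = t (c (P a)) := by omega
        apply hnx2 (P a)
        apply sch_subset n _ _ (hf (t (c (P a))))
        intro x hx
        rw [Finset.mem_image] at hx
        obtain ⟨r, hr, rfl⟩ := hx
        rw [← hP, Finset.mem_Ico] at hr
        have hlt : P (a+1) < P (c p + 1) := hPm (by omega)
        have m3 := hmem r ((hPp a).trans hr.1) (by omega)
        rw [Finset.mem_filter]
        refine ⟨m3, le_antisymm ?_ ?_⟩
        · rw [← heq]; exact hm _ m3 _ m2 (hc.monotone hr.2.le)
        · exact hm _ m1 _ m3 (hc.monotone hr.1)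
    have h1 := key (c p) le_rfl
    have h2 := hd _ (hmem (P (c p)) (hPp _) (hPm (by omega)))
    have h3 := hmin _ (hmem p le_rfl (by rw [← hP0]; exact hPm (by simp)))
    omega



theorem sch_spread_idx (n : ℕ) {d : ℕ} (μ ν : Fin d → ℕ+) (s : Finset (Fin d)) (F : Finset ℕ+)
    (hF : F ∈ Schreier (n + 1))
    (hν : ∀ i ∈ s, ν i ∈ F) (hν' : ∀ i ∈ s, ∀ j ∈ s, i < j → ν i < ν j)
    (hμ' : ∀ i ∈ s, ∀ j ∈ s, i < j → μ i < μ j) (hle : ∀ i ∈ s, ν i ≤ μ i) :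
    s.image μ ∈ Schreier (n + 1) := by
  have hex : ∀ g : ℕ+, ∃ v : ℕ+, ∀ i ∈ s, μ i = g → v = ν i := by
    intro g
    by_cases h : ∃ i ∈ s, μ i = g
    · obtain ⟨i, hi, h⟩ := h
      refine ⟨ν i, fun j hj hj' => ?_⟩
      rcases lt_trichotomy i j with h1 | h1 | h1
      · exact absurd (h.trans hj'.symm) (hμ' i hi j hj h1).ne
      · rw [h1]
      · exact absurd (h.trans hj'.symm) (hμ' j hj i hi h1).ne'
    · push Not at h
      exact ⟨1, fun i hi hh => absurd hh (h i hi)⟩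
  choose φ hφ using hex
  apply sch_spread n F _ φ hF
  · intro g hg
    obtain ⟨i, hi, rfl⟩ := Finset.mem_image.mp hg
    rw [hφ _ i hi rfl]; exact hν i hi
  · intro g hg g' hg' hlt
    obtain ⟨i, hi, rfl⟩ := Finset.mem_image.mp hg
    obtain ⟨j, hj, rfl⟩ := Finset.mem_image.mp hg'
    rw [hφ _ i hi rfl, hφ _ j hj rfl]
    apply hν' i hi j hj
    rcases lt_trichotomy i j with h1 | h1 | h1
    · exact h1
    · rw [h1] at hlt; exact absurd hlt (lt_irrefl _)
    · exact absurd hlt (hμ' j hj i hi h1).not_gt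
  · intro g hg
    obtain ⟨i, hi, rfl⟩ := Finset.mem_image.mp hg
    rw [hφ _ i hi rfl]; exact hle i hi

/-- adding a new first element to a spread set -/
theorem sch_add (n : ℕ) (C B : Finset ℕ+) (φ : ℕ+ → ℕ+) (i j : ℕ+) (hC : C ∈ Schreier (n + 2))
    (hi : i ∈ C) (hij : i < j) (h1 : ∀ g ∈ B, φ g ∈ C)
    (h2 : ∀ g ∈ B, ∀ g' ∈ B, g < g' → φ g < φ g') (h3 : ∀ g ∈ B, φ g ≤ g) (h4 : ∀ g ∈ B, j < g) :
    insert j B ∈ Schreier (n + 2) := by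
  rw [sch_succ_iff] at hC ⊢
  obtain ⟨d, t, hm, hd, hmin, hf⟩ := hC
  have hdi := hmin i hi
  have hij' : (i : ℕ) < j := by exact_mod_cast hij
  have h2' : ∀ a ∈ B, ∀ b ∈ B, a ≤ b → φ a ≤ φ b := by
    intro a ha b hb hab
    rcases hab.eq_or_lt with h | h
    · rw [h]
    · exact (h2 a ha b hb h).le
  refine ⟨d + 1, fun a => if a ≤ j then 0 else t (φ a) + 1, ?_, ?_, ?_, ?_⟩
  · intro a ha b hb hab
    by_cases h : b ≤ j
    · simp [h, hab.trans h]
    · by_cases h' : a ≤ j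
      · simp [h']
      · simp only [h, h', if_false]
        have ha' : a ∈ B := by
          rcases Finset.mem_insert.mp ha with rfl | h'' 
          · exact absurd le_rfl h'
          · exact h''
        have hb' : b ∈ B := by
          rcases Finset.mem_insert.mp hb with rfl | h'' 
          · exact absurd le_rfl h
          · exact h''
        have := hm _ (h1 a ha') _ (h1 b hb') (h2' a ha' b hb' hab)
        omega
  · intro a ha
    rcases Finset.mem_insert.mp ha with rfl | h
    · simp
    · have := hd _ (h1 a h)
      simp [not_le.mpr (h4 a h)]; exact this
  · intro a ha
    rcases Finset.mem_insert.mp ha with rfl | h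
    · omega
    · have : (j:ℕ) < a := by exact_mod_cast h4 a h
      omega
  · intro r
    rcases Nat.eq_zero_or_pos r with hr | hr
    · apply sch_subset n {j} _ (sch_singleton n j)
      intro a ha
      simp only [Finset.mem_filter, Finset.mem_insert] at ha
      rcases ha with ⟨h | h, h'⟩
      · simp [h]
      · simp [not_le.mpr (h4 a h)] at h'; omega
    · have hsub : ∀ a ∈ (insert j B).filter (fun a => (if a ≤ j then 0 else t (φ a) + 1) = r),
          a ∈ B ∧ t (φ a) = r - 1 := by
        intro a ha
        simp only [Finset.mem_filter, Finset.mem_insert] at ha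
        rcases ha with ⟨h | h, h'⟩
        · simp [h] at h'; omega
        · simp [not_le.mpr (h4 a h)] at h'; exact ⟨h, by omega⟩
      apply sch_spread n _ _ φ (hf (r - 1))
      · intro g hg
        obtain ⟨hg1, hg2⟩ := hsub g hg
        simp only [Finset.mem_filter]
        exact ⟨h1 g hg1, hg2⟩
      · intro g hg g' hg'
        exact h2 g (hsub g hg).1 g' (hsub g' hg').1
      · intro g hg
        exact h3 g (hsub g hg).1

theorem exists_far (σ : Equiv.Perm ℕ+) (M : ℕ+) : ∃ b, M < b ∧ M < σ b := by
  by_contra h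
  push Not at h
  have : (Set.univ : Set ℕ+) ⊆ Set.Iic M ∪ σ ⁻¹' Set.Iic M := by
    intro b _
    by_cases hb : M < b
    · right; exact h b hb
    · left; exact not_lt.mp hb
  have hfin : (Set.Iic M ∪ σ ⁻¹' Set.Iic M).Finite :=
    (Set.finite_Iic M).union ((Set.finite_Iic M).preimage σ.injective.injOn)
  exact Set.infinite_univ (hfin.subset this)

theorem perm_id (n : ℕ) (hn : 2 ≤ n) (k : ℕ) (σ : Equiv.Perm ℕ+) (h1 : σ 1 = 1)
    (hσ : ∀ A : Finset ℕ+, 1 ∉ A → k < A.card → A ∈ Schreier n → A.image σ ∈ Schreier n) :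
    ∀ j, σ j = j := by
  obtain ⟨n, rfl⟩ : ∃ m, n = m + 2 := ⟨n - 2, by omega⟩
  by_cases hdec : ∃ j, σ j < j
  · exfalso
    obtain ⟨j, hj⟩ := hdec
    set i := σ j with hi
    have hi1 : i ≠ 1 := by
      intro h
      have : j = 1 := σ.injective (by rw [h1, ← hi, h])
      rw [h, this] at hj
      exact absurd hj (lt_irrefl _)
    have hi2 : 2 ≤ i := by
      have h : (i:ℕ) ≠ 1 := by exact_mod_cast hi1
      have := i.pos
      have : 2 ≤ (i:ℕ) := by omega
      exact_mod_cast this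
    choose nx hnx1 hnx2 using exists_far σ
    let K : ℕ+ := ⟨k + 1, by omega⟩
    let b : ℕ → ℕ+ := fun r => Nat.rec (nx (max j K)) (fun _ x => nx (max x (σ x))) r
    have hb0 : b 0 = nx (max j K) := rfl
    have hbs : ∀ r, b (r+1) = nx (max (b r) (σ (b r))) := fun r => rfl
    have hbm : StrictMono b := strictMono_nat_of_lt_succ (fun r => by
      rw [hbs]; exact (le_max_left _ _).trans_lt (hnx1 _))
    have hcb : ∀ r, σ (b r) < b (r+1) := fun r => by
      rw [hbs]; exact (le_max_right _ _).trans_lt (hnx1 _)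
    let c : ℕ → ℕ+ := fun r => σ (b r)
    have hcm : StrictMono c := strictMono_nat_of_lt_succ (fun r => by
      show σ (b r) < σ (b (r+1))
      rw [hbs]; exact (le_max_right _ _).trans_lt (hnx2 _))
    have hjb : ∀ r, j < b r := fun r =>
      lt_of_lt_of_le (by rw [hb0]; exact (le_max_left _ _).trans_lt (hnx1 _)) (hbm.monotone (Nat.zero_le r))
    have hKc : K < c 0 := by
      show K < σ (b 0)
      rw [hb0]; exact (le_max_right _ _).trans_lt (hnx2 _)
    have hjc : ∀ r, j < c r := fun r =>
      lt_of_lt_of_le (by show j < σ (b 0); rw [hb0]; exact (le_max_left _ _).trans_lt (hnx2 _))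
        (hcm.monotone (Nat.zero_le r))
    let C : ℕ → Finset ℕ+ := fun Q => insert i ((Finset.range Q).image c)
    have hex : ∃ Q, C Q ∉ Schreier (n + 2) := by
      obtain ⟨q, _, hq⟩ := sch_no_inf (n+1) c hcm 0
      refine ⟨q, fun h => hq ?_⟩
      apply sch_subset (n+1) _ _ h
      intro x hx
      simp only [C]
      rw [Finset.mem_insert]; right
      simpa using hx
    classical
    let Q := Nat.find hex
    have hQ : C Q ∉ Schreier (n + 2) := Nat.find_spec hex
    have hQk : k < Q := by
      by_contra hcon
      apply hQ
      apply sch_cons _ (by omega) i hi2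
      · intro x hx
        obtain ⟨r, _, rfl⟩ := Finset.mem_image.mp hx
        exact hj.trans (hjc r)
      · intro x hx
        obtain ⟨r, _, rfl⟩ := Finset.mem_image.mp hx
        rw [Finset.card_image_of_injective _ hcm.injective, Finset.card_range]
        have h2 : (K:ℕ) < c 0 := by exact_mod_cast hKc
        have h3 : (c 0 : ℕ) ≤ c r := by exact_mod_cast hcm.monotone (Nat.zero_le r)
        have h4 : (K : ℕ) = k + 1 := rfl
        omega
    obtain ⟨q, hq⟩ : ∃ q, Q = q + 1 := ⟨Q - 1, by omega⟩
    have hCq : C q ∈ Schreier (n + 2) := by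
      by_contra hcon
      have := Nat.find_min' hex hcon
      have : Q ≤ q := this
      omega
    have hbinv : ∀ r, Function.invFun b (b r) = r := Function.leftInverse_invFun hbm.injective
    let φ : ℕ+ → ℕ+ := fun x => if Function.invFun b x = 0 then i else c (Function.invFun b x - 1)
    have hφ0 : φ (b 0) = i := by simp [φ, hbinv]
    have hφs : ∀ r, φ (b (r+1)) = c r := fun r => by simp [φ, hbinv]
    have hA : insert j ((Finset.range Q).image b) ∈ Schreier (n + 2) := by
      apply sch_add n (C q) _ φ i j hCq (Finset.mem_insert_self _ _) hj
      · intro g hg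
        obtain ⟨r, hr, rfl⟩ := Finset.mem_image.mp hg
        rcases r with _ | r
        · rw [hφ0]; exact Finset.mem_insert_self _ _
        · rw [hφs]
          apply Finset.mem_insert_of_mem
          apply Finset.mem_image_of_mem
          simp at hr ⊢; omega
      · intro g hg g' hg' hlt
        obtain ⟨r, hr, rfl⟩ := Finset.mem_image.mp hg
        obtain ⟨r', hr', rfl⟩ := Finset.mem_image.mp hg'
        have hlt' := hbm.lt_iff_lt.mp hlt
        rcases r' with _ | r'
        · omega
        · rw [hφs]
          rcases r with _ | r
          · rw [hφ0]; exact hj.trans (hjc _)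
          · rw [hφs]; apply hcm; omega
      · intro g hg
        obtain ⟨r, hr, rfl⟩ := Finset.mem_image.mp hg
        rcases r with _ | r
        · rw [hφ0]; exact (hj.trans (hjb 0)).le
        · rw [hφs]; exact (hcb r).le
      · intro g hg
        obtain ⟨r, hr, rfl⟩ := Finset.mem_image.mp hg
        exact hjb r
    have hnot : j ∉ (Finset.range Q).image b := by
      intro h
      obtain ⟨r, hr, h'⟩ := Finset.mem_image.mp h
      exact absurd (hjb r) (by rw [h']; exact lt_irrefl _)
    have := hσ _ ?_ ?_ hA
    · apply hQ
      convert this using 1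
      simp only [C, Finset.image_insert, Finset.image_image]
      rfl
    · intro h
      have hj1 : (1:ℕ+) < j := lt_of_le_of_lt (PNat.one_le i) hj
      rcases Finset.mem_insert.mp h with h | h
      · rw [← h] at hj1; exact absurd hj1 (lt_irrefl _)
      · obtain ⟨r, hr, h'⟩ := Finset.mem_image.mp h
        have := hj1.trans (hjb r)
        rw [h'] at this; exact absurd this (lt_irrefl _)
    · rw [Finset.card_insert_of_notMem hnot, Finset.card_image_of_injective _ hbm.injective,
        Finset.card_range]
      omega
  · push Not at hdec
    intro j
    induction j using PNat.strongInductionOn with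
    | _ j ih =>
      have h2 := hdec (σ.symm j)
      rw [Equiv.apply_symm_apply] at h2
      rcases h2.eq_or_lt with h | h
      · rw [Equiv.symm_apply_eq] at h; exact h.symm
      · have := ih _ h
        rw [Equiv.apply_symm_apply] at this
        rw [← this] at h; exact absurd h (lt_irrefl _)



/-! Basic facts on the norm on `c₀₀` -/

def l1n (x : ℕ+ →₀ ℝ) : ℝ := ∑ i ∈ x.support, |x i|

theorem adm_disj {S : Set (Finset ℕ+)} {d : ℕ} {E : Fin d → Finset ℕ+} (hE : TsAdmissible S E)
    (a b : Fin d) (i : ℕ+) (ha : i ∈ E a) (hb : i ∈ E b) : a = b := by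
  rcases lt_trichotomy a b with h | h | h
  · exact absurd (hE.2.1 a b h i ha i hb) (lt_irrefl _)
  · exact h
  · exact absurd (hE.2.1 b a h i hb i ha) (lt_irrefl _)

theorem adm_sum_le {S : Set (Finset ℕ+)} {d : ℕ} {E : Fin d → Finset ℕ+} (hE : TsAdmissible S E)
    (i : ℕ+) (r : ℝ) (hr : 0 ≤ r) : ∑ a, (if i ∈ E a then r else 0) ≤ r := by
  by_cases h : ∃ a, i ∈ E a
  · obtain ⟨a, ha⟩ := h
    rw [Finset.sum_eq_single a]
    · simp [ha]
    · intro b _ hb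
      rw [if_neg]
      intro h'; exact hb (adm_disj hE b a i h' ha)
    · simp
  · push Not at h
    simp [h, hr]

theorem tsProj_ap (E : Finset ℕ+) (x : ℕ+ →₀ ℝ) (i : ℕ+) :
    tsProj E x i = if i ∈ E then x i else 0 := by
  simp [tsProj, Finsupp.filter_apply]

theorem abs_tsProj_le (E : Finset ℕ+) (x : ℕ+ →₀ ℝ) (i : ℕ+) : |tsProj E x i| ≤ |x i| := by
  rw [tsProj_ap]; split_ifs <;> simp

theorem l1n_eq (x : ℕ+ →₀ ℝ) (F : Finset ℕ+) (h : x.support ⊆ F) : l1n x = ∑ i ∈ F, |x i| := by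
  apply Finset.sum_subset h
  intro i _ hi
  simpa using hi

theorem tsProj_support (E : Finset ℕ+) (x : ℕ+ →₀ ℝ) : (tsProj E x).support ⊆ x.support := by
  intro i hi
  rw [Finsupp.mem_support_iff, tsProj_ap] at hi
  rw [Finsupp.mem_support_iff]
  intro h; simp [h] at hi

theorem l1n_nonneg (x : ℕ+ →₀ ℝ) : 0 ≤ l1n x := Finset.sum_nonneg (fun _ _ => abs_nonneg _)

theorem l1n_mono (x y : ℕ+ →₀ ℝ) (h : ∀ i, |x i| ≤ |y i|) : l1n x ≤ l1n y := by
  rw [l1n_eq x (x.support ∪ y.support) Finset.subset_union_left,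
    l1n_eq y (x.support ∪ y.support) Finset.subset_union_right]
  exact Finset.sum_le_sum (fun i _ => h i)

theorem abs_le_l1n (x : ℕ+ →₀ ℝ) (i : ℕ+) : |x i| ≤ l1n x := by
  by_cases h : i ∈ x.support
  · exact Finset.single_le_sum (f := fun i => |x i|) (fun _ _ => abs_nonneg _) h
  · have : x i = 0 := by simpa using h
    rw [this, abs_zero]; exact l1n_nonneg x

theorem adm_l1n {S : Set (Finset ℕ+)} {d : ℕ} {E : Fin d → Finset ℕ+} (hE : TsAdmissible S E)
    (x : ℕ+ →₀ ℝ) : ∑ a, l1n (tsProj (E a) x) ≤ l1n x := by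
  have : ∀ a, l1n (tsProj (E a) x) = ∑ i ∈ x.support, if i ∈ E a then |x i| else 0 := by
    intro a
    rw [l1n_eq _ _ (tsProj_support _ x)]
    apply Finset.sum_congr rfl
    intro i _
    rw [tsProj_ap]; split_ifs <;> simp
  simp only [this]
  rw [Finset.sum_comm]
  exact Finset.sum_le_sum (fun i _ => adm_sum_le hE i _ (abs_nonneg _))

section
variable {θ : ℝ} (h0 : 0 < θ) (h1 : θ ≤ 1) (S : Set (Finset ℕ+))
include h0 h1

theorem aux_bd (m : ℕ) : ∀ x, 0 ≤ tnormAux θ S m x ∧ tnormAux θ S m x ≤ l1n x := by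
  induction m with
  | zero =>
    intro x
    simp only [tnormAux]
    exact ⟨Real.iSup_nonneg (fun _ => abs_nonneg _), ciSup_le (abs_le_l1n x)⟩
  | succ m ih =>
    intro x
    simp only [tnormAux]
    refine ⟨le_max_of_le_left (ih x).1, max_le (ih x).2 ?_⟩
    apply Real.sSup_le _ (l1n_nonneg x)
    rintro r ⟨d, E, hE, rfl⟩
    calc θ * ∑ i, tnormAux θ S m (tsProj (E i) x) ≤ 1 * ∑ i, l1n (tsProj (E i) x) := by
          apply mul_le_mul h1 (Finset.sum_le_sum (fun i _ => (ih _).2))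
            (Finset.sum_nonneg (fun i _ => (ih _).1)) zero_le_one
      _ ≤ l1n x := by rw [one_mul]; exact adm_l1n hE x

theorem aux_bddAbove (m : ℕ) (x : ℕ+ →₀ ℝ) :
    BddAbove {r : ℝ | ∃ (d : ℕ) (E : Fin d → Finset ℕ+), TsAdmissible S E ∧
          r = θ * ∑ i, tnormAux θ S m (tsProj (E i) x)} := by
  refine ⟨l1n x, ?_⟩
  rintro r ⟨d, E, hE, rfl⟩
  calc θ * ∑ i, tnormAux θ S m (tsProj (E i) x) ≤ 1 * ∑ i, l1n (tsProj (E i) x) := by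
        apply mul_le_mul h1 (Finset.sum_le_sum (fun i _ => (aux_bd h0 h1 S m _).2))
          (Finset.sum_nonneg (fun i _ => (aux_bd h0 h1 S m _).1)) zero_le_one
    _ ≤ l1n x := by rw [one_mul]; exact adm_l1n hE x

theorem aux_adm (m : ℕ) (x : ℕ+ →₀ ℝ) {d : ℕ} {E : Fin d → Finset ℕ+} (hE : TsAdmissible S E) :
    θ * ∑ i, tnormAux θ S m (tsProj (E i) x) ≤ tnormAux θ S (m+1) x := by
  simp only [tnormAux]
  exact le_max_of_le_right (le_csSup (aux_bddAbove h0 h1 S m x) ⟨d, E, hE, rfl⟩)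

theorem aux_mono (m : ℕ) : ∀ x y : ℕ+ →₀ ℝ, (∀ i, |x i| ≤ |y i|) →
    tnormAux θ S m x ≤ tnormAux θ S m y := by
  induction m with
  | zero =>
    intro x y h
    simp only [tnormAux]
    apply ciSup_mono ⟨l1n y, _⟩ h
    rintro _ ⟨i, rfl⟩
    exact abs_le_l1n y i
  | succ m ih =>
    intro x y h
    have hle : tnormAux θ S m y ≤ tnormAux θ S (m+1) y := by
      simp only [tnormAux]; exact le_max_left _ _
    have : tnormAux θ S (m+1) x = max (tnormAux θ S m x)
        (sSup {r : ℝ | ∃ (d : ℕ) (E : Fin d → Finset ℕ+), TsAdmissible S E ∧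
          r = θ * ∑ i, tnormAux θ S m (tsProj (E i) x)}) := by simp only [tnormAux]
    rw [this]
    refine max_le ((ih x y h).trans hle) ?_
    apply Real.sSup_le _ (aux_bd h0 h1 S _ y).1
    rintro r ⟨d, E, hE, rfl⟩
    refine le_trans ?_ (aux_adm h0 h1 S m y hE)
    apply mul_le_mul_of_nonneg_left _ h0.le
    apply Finset.sum_le_sum
    intro a _
    apply ih
    intro i
    rw [tsProj_ap, tsProj_ap]
    split_ifs
    · exact h i
    · simp

theorem aux_monotone (x : ℕ+ →₀ ℝ) : Monotone (fun m => tnormAux θ S m x) := by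
  apply monotone_nat_of_le_succ
  intro m
  simp only [tnormAux]; exact le_max_left _ _

theorem tn_bdd (x : ℕ+ →₀ ℝ) : BddAbove (Set.range (fun m => tnormAux θ S m x)) := by
  refine ⟨l1n x, ?_⟩
  rintro _ ⟨m, rfl⟩
  exact (aux_bd h0 h1 S m x).2

theorem aux_le_tn (m : ℕ) (x : ℕ+ →₀ ℝ) : tnormAux θ S m x ≤ tnorm θ S x :=
  le_ciSup (tn_bdd h0 h1 S x) m

theorem tn_mono (x y : ℕ+ →₀ ℝ) (h : ∀ i, |x i| ≤ |y i|) : tnorm θ S x ≤ tnorm θ S y :=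
  ciSup_mono (tn_bdd h0 h1 S y) (fun m => aux_mono h0 h1 S m x y h)

theorem tn_nonneg (x : ℕ+ →₀ ℝ) : 0 ≤ tnorm θ S x :=
  (aux_bd h0 h1 S 0 x).1.trans (aux_le_tn h0 h1 S 0 x)

theorem tn_coord (x : ℕ+ →₀ ℝ) (i : ℕ+) : |x i| ≤ tnorm θ S x := by
  refine le_trans ?_ (aux_le_tn h0 h1 S 0 x)
  simp only [tnormAux]
  apply le_ciSup (f := fun i => |x i|) _ i
  refine ⟨l1n x, ?_⟩
  rintro _ ⟨i, rfl⟩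
  exact abs_le_l1n x i

theorem tn_adm (x : ℕ+ →₀ ℝ) {d : ℕ} {E : Fin d → Finset ℕ+} (hE : TsAdmissible S E) :
    θ * ∑ i, tnorm θ S (tsProj (E i) x) ≤ tnorm θ S x := by
  have ht : Filter.Tendsto (fun m => θ * ∑ i, tnormAux θ S m (tsProj (E i) x)) Filter.atTop
      (nhds (θ * ∑ i, tnorm θ S (tsProj (E i) x))) := by
    apply Filter.Tendsto.const_mul
    apply tendsto_finsetSum
    intro i _
    exact tendsto_atTop_ciSup (aux_monotone h0 h1 S _) (tn_bdd h0 h1 S _)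
  apply le_of_tendsto' ht
  intro m
  exact (aux_adm h0 h1 S m x hE).trans (aux_le_tn h0 h1 S _ x)

theorem tn_upper (x : ℕ+ →₀ ℝ) (C : ℝ) (hc : ∀ i, |x i| ≤ C)
    (hC : ∀ (d : ℕ) (E : Fin d → Finset ℕ+), TsAdmissible S E →
      θ * ∑ i, tnorm θ S (tsProj (E i) x) ≤ C) : tnorm θ S x ≤ C := by
  have hC0 : 0 ≤ C := (abs_nonneg _).trans (hc 1)
  apply ciSup_le
  intro m
  induction m with
  | zero => simp only [tnormAux]; exact ciSup_le hc
  | succ m ih =>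
    simp only [tnormAux]
    refine max_le ih (Real.sSup_le ?_ hC0)
    rintro r ⟨d, E, hE, rfl⟩
    refine le_trans ?_ (hC d E hE)
    apply mul_le_mul_of_nonneg_left _ h0.le
    exact Finset.sum_le_sum (fun i _ => aux_le_tn h0 h1 S _ _)

theorem tn_att (x : ℕ+ →₀ ℝ) : (∃ i, |x i| = tnorm θ S x) ∨
    ∃ (d : ℕ) (E : Fin d → Finset ℕ+), TsAdmissible S E ∧
      θ * ∑ i, tnorm θ S (tsProj (E i) x) = tnorm θ S x := by
  classical
  -- the set of candidate values
  let V : Set ℝ := (Set.range fun i => |x i|) ∪ {r : ℝ | ∃ (d : ℕ) (E : Fin d → Finset ℕ+),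
    TsAdmissible S E ∧ r = θ * ∑ i, tnorm θ S (tsProj (E i) x)}
  have hzero : tnorm θ S 0 = 0 := by
    apply le_antisymm _ (tn_nonneg h0 h1 S 0)
    apply ciSup_le; intro m
    refine (aux_bd h0 h1 S m 0).2.trans ?_
    simp [l1n]
  have hfin : V.Finite := by
    apply Set.Finite.union
    · apply ((x.support.finite_toSet.image (fun i => |x i|)).union (Set.finite_singleton 0)).subset
      rintro _ ⟨i, rfl⟩
      by_cases h : i ∈ x.support
      · left; exact ⟨i, h, rfl⟩
      · right; simpa using h
    · apply (((x.support.powerset.powerset).finite_toSet).image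
        (fun 𝓔 : Finset (Finset ℕ+) => θ * ∑ G ∈ 𝓔, tnorm θ S (tsProj G x))).subset
      rintro r ⟨d, E, hE, rfl⟩
      let I := Finset.univ.filter (fun a => (E a ∩ x.support).Nonempty)
      refine ⟨I.image (fun a => E a ∩ x.support), ?_, ?_⟩
      · rw [Finset.mem_coe, Finset.mem_powerset]
        intro G hG
        obtain ⟨a, _, rfl⟩ := Finset.mem_image.mp hG
        rw [Finset.mem_powerset]
        exact Finset.inter_subset_right
      · dsimp only
        rw [Finset.sum_image]
        · congr 1
          have hproj : ∀ a, tsProj (E a ∩ x.support) x = tsProj (E a) x := by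
            intro a
            ext i
            rw [tsProj_ap, tsProj_ap]
            by_cases h : x i = 0
            · simp [h]
            · simp [h]
          simp only [hproj]
          apply Finset.sum_subset (Finset.subset_univ _)
          intro a _ ha
          have : tsProj (E a) x = 0 := by
            rw [← hproj a]
            have : E a ∩ x.support = ∅ := by
              by_contra hne
              exact ha (by simp [I]; exact Finset.nonempty_iff_ne_empty.mpr hne)
            rw [this]; ext i; simp [tsProj_ap]
          rw [this, hzero]
        · intro a ha b hb hab
          simp only [I, Finset.coe_filter, Finset.mem_univ, true_and] at ha
          obtain ⟨i, hi⟩ := ha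
          have hi2 : i ∈ E b ∩ x.support := by
            have : E a ∩ x.support = E b ∩ x.support := hab
            rw [← this]; exact hi
          exact adm_disj hE a b i (Finset.mem_inter.mp hi).1 (Finset.mem_inter.mp hi2).1
  have hne : V.Nonempty := ⟨|x 1|, Or.inl ⟨1, rfl⟩⟩
  obtain ⟨v, hv, hmax⟩ := hfin.exists_maximal hne
  have hmax' : ∀ w ∈ V, w ≤ v := by
    intro w hw
    by_contra hcon
    exact hcon (hmax hw (not_le.mp hcon).le)
  have hle : tnorm θ S x ≤ v := by
    apply tn_upper h0 h1 S x v
    · intro i; exact hmax' _ (Or.inl ⟨i, rfl⟩)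
    · intro d E hE; exact hmax' _ (Or.inr ⟨d, E, hE, rfl⟩)
  rcases hv with ⟨i, rfl⟩ | ⟨d, E, hE, rfl⟩
  · left; exact ⟨i, le_antisymm (tn_coord h0 h1 S x i) hle⟩
  · right; exact ⟨d, E, hE, le_antisymm (tn_adm h0 h1 S x hE) hle⟩

end



section
variable {X : Type*} [NormedAddCommGroup X] [NormedSpace ℝ X]

/-- projection onto a finite set of coordinates -/
def PP (e : ℕ+ → X) (c : X →ₗ[ℝ] (ℕ+ → ℝ)) (E : Finset ℕ+) (x : X) : X := ∑ i ∈ E, c x i • e i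

/-- bundle of basic facts -/
structure TG (θ : ℝ) (k n : ℕ) (e : ℕ+ → X) (c : X →ₗ[ℝ] (ℕ+ → ℝ)) : Prop where
  h0 : 0 < θ
  hk : 2 ≤ k
  hθ : θ * k = 1
  hn : 2 ≤ n
  c_e : ∀ i j, c (e i) j = if j = i then 1 else 0
  hs : ∀ x, HasSum (fun i => c x i • e i) x
  huniq : ∀ x (a : ℕ+ → ℝ), HasSum (fun i => a i • e i) x → a = c x
  mono : ∀ x y, (∀ i, |c x i| ≤ |c y i|) → ‖x‖ ≤ ‖y‖
  coord : ∀ x i, |c x i| ≤ ‖x‖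
  adm : ∀ (x : X) (d : ℕ) (E : Fin d → Finset ℕ+), TsAdmissible (Schreier n) E →
    θ * ∑ a, ‖PP e c (E a) x‖ ≤ ‖x‖
  upper : ∀ (x : X) (C : ℝ), (∀ i, |c x i| ≤ C) →
    (∀ (d : ℕ) (E : Fin d → Finset ℕ+), TsAdmissible (Schreier n) E →
      θ * ∑ a, ‖PP e c (E a) x‖ ≤ C) → ‖x‖ ≤ C
  att : ∀ (x : X) (F : Finset ℕ+), PP e c F x = x → (∃ i, |c x i| = ‖x‖) ∨
    ∃ (d : ℕ) (E : Fin d → Finset ℕ+), TsAdmissible (Schreier n) E ∧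
      θ * ∑ a, ‖PP e c (E a) x‖ = ‖x‖

theorem exists_TG (θ : ℝ) (hθ0 : 0 < θ) (k : ℕ) (hk : 2 ≤ k) (hθk : θ⁻¹ = (k : ℝ))
    (n : ℕ) (hn : 2 ≤ n) (e : ℕ+ → X) (hX : IsTsirelsonSpace θ n X e) :
    ∃ c : X →ₗ[ℝ] (ℕ+ → ℝ), TG θ k n e c := by
  classical
  have hk0 : (2:ℝ) ≤ k := by exact_mod_cast hk
  have hθ : θ * k = 1 := by rw [← hθk]; exact mul_inv_cancel₀ hθ0.ne'
  have hθ1 : θ ≤ 1 := by nlinarith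
  choose c hc hcu using hX.expansion
  have huniq : ∀ x (a : ℕ+ → ℝ), HasSum (fun i => a i • e i) x → a = c x := fun x a h => hcu x a h
  let C : X →ₗ[ℝ] (ℕ+ → ℝ) :=
    { toFun := c
      map_add' := by
        intro x y
        symm; apply huniq
        have := (hc x).add (hc y)
        simpa only [Pi.add_apply, add_smul] using this
      map_smul' := by
        intro r x
        symm; apply huniq
        have := (hc x).const_smul r
        simpa only [Pi.smul_apply, smul_eq_mul, mul_smul, RingHom.id_apply] using this }
  have hC : ∀ x, C x = c x := fun x => rfl
  have hs : ∀ x, HasSum (fun i => C x i • e i) x := hc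
  have hce : ∀ i j, C (e i) j = if j = i then 1 else 0 := by
    intro i j
    have : (fun j => if j = i then (1:ℝ) else 0) = c (e i) := by
      apply huniq
      have := hasSum_ite_eq i (e i)
      refine this.congr_fun ?_ |> fun h => h
      intro j
      by_cases h : j = i
      · subst h; simp
      · simp [h]
    rw [hC, ← this]
  let v : (ℕ+ →₀ ℝ) → X := fun a => a.sum fun i r => r • e i
  have hv : ∀ a, ‖v a‖ = tnorm θ (Schreier n) a := hX.norm_embed
  let A : Finset ℕ+ → X → (ℕ+ →₀ ℝ) := fun F x => Finsupp.onFinset F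
    (fun i => if i ∈ F then C x i else 0) (by intro i hi; by_contra h; simp [h] at hi)
  have hA : ∀ F x i, A F x i = if i ∈ F then C x i else 0 := fun F x i => rfl
  have hPA : ∀ F x, PP e C F x = v (A F x) := by
    intro F x
    simp only [v, PP]
    rw [Finsupp.sum_of_support_subset (s := F)]
    · apply Finset.sum_congr rfl
      intro i hi
      rw [hA, if_pos hi]
    · exact Finsupp.support_onFinset_subset
    · simp
  have hcP : ∀ F x i, C (PP e C F x) i = if i ∈ F then C x i else 0 := by
    intro F x i
    simp only [PP, map_sum, map_smul, Finset.sum_apply, Pi.smul_apply, hce, smul_eq_mul, mul_ite,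
      mul_one, mul_zero]
    simp
  have hPP : ∀ E F x, PP e C E (PP e C F x) = v (tsProj E (A F x)) := by
    intro E F x
    rw [hPA]
    congr 1
    ext i
    rw [hA, hcP, tsProj_ap, hA]
  have hlim : ∀ x, Filter.Tendsto (fun F => ‖PP e C F x‖) Filter.atTop (nhds ‖x‖) := by
    intro x
    exact (hs x).norm
  have hPsub : ∀ E F x, E ⊆ F → PP e C E (PP e C F x) = PP e C E x := by
    intro E F x h
    unfold PP
    apply Finset.sum_congr rfl
    intro i hi
    have := hcP F x i
    unfold PP at this
    rw [this, if_pos (h hi)]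
  have hmono : ∀ x y, (∀ i, |C x i| ≤ |C y i|) → ‖x‖ ≤ ‖y‖ := by
    intro x y h
    apply le_of_tendsto_of_tendsto' (hlim x) (hlim y)
    intro F
    rw [hPA, hPA, hv, hv]
    apply tn_mono hθ0 hθ1
    intro i
    rw [hA, hA]
    split_ifs
    · exact h i
    · simp
  refine ⟨C, hθ0, hk, hθ, hn, hce, hs, huniq, hmono, ?_, ?_, ?_, ?_⟩
  · intro x i
    apply ge_of_tendsto (hlim x)
    filter_upwards [Filter.eventually_ge_atTop {i}] with F hF
    have hi : i ∈ F := hF (Finset.mem_singleton_self i)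
    rw [hPA, hv]
    refine le_trans ?_ (tn_coord hθ0 hθ1 _ _ i)
    rw [hA, if_pos hi]
  · intro x d E hE
    apply ge_of_tendsto (hlim x)
    filter_upwards [Filter.eventually_ge_atTop (Finset.univ.biUnion E)] with F hF
    have hi : ∀ a, E a ⊆ F := fun a => (Finset.subset_biUnion_of_mem E (Finset.mem_univ a)).trans hF
    have := tn_adm hθ0 hθ1 _ (A F x) hE
    rw [hPA F x, hv]
    refine le_trans (le_of_eq ?_) this
    congr 1
    apply Finset.sum_congr rfl
    intro a _
    rw [← hv, ← hPP, hPsub _ _ _ (hi a)]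
  · intro x r h1 h2
    apply le_of_tendsto' (hlim x)
    intro F
    have hr : 0 ≤ r := (abs_nonneg _).trans (h1 1)
    rw [hPA, hv]
    apply tn_upper hθ0 hθ1
    · intro i
      rw [hA]
      split_ifs
      · exact h1 i
      · simpa using hr
    · intro d E hE
      refine le_trans ?_ (h2 d E hE)
      apply mul_le_mul_of_nonneg_left _ hθ0.le
      apply Finset.sum_le_sum
      intro a _
      rw [← hv, ← hPP]
      apply hmono
      intro i
      rw [hcP, hcP, hcP]
      split_ifs <;> simp
  · intro x F hx
    have hx' : x = v (A F x) := by rw [← hPA, hx]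
    have hn' : ‖x‖ = tnorm θ (Schreier n) (A F x) := by rw [← hv, ← hx']
    rcases tn_att hθ0 hθ1 (Schreier n) (A F x) with ⟨i, hi⟩ | ⟨d, E, hE, h⟩
    · left
      refine ⟨i, ?_⟩
      rw [hn', ← hi, hA, ← hcP, hx]
    · right
      refine ⟨d, E, hE, ?_⟩
      rw [hn', ← h]
      congr 1
      apply Finset.sum_congr rfl
      intro a _
      rw [← hv, ← hPP, hx]
end


section
variable {X : Type*} [NormedAddCommGroup X] [NormedSpace ℝ X]

theorem PP_add (e : ℕ+ → X) (c : X →ₗ[ℝ] (ℕ+ → ℝ)) (E : Finset ℕ+) (x y : X) :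
    PP e c E (x + y) = PP e c E x + PP e c E y := by
  simp only [PP, map_add, Pi.add_apply, add_smul, Finset.sum_add_distrib]

theorem PP_sub (e : ℕ+ → X) (c : X →ₗ[ℝ] (ℕ+ → ℝ)) (E : Finset ℕ+) (x y : X) :
    PP e c E (x - y) = PP e c E x - PP e c E y := by
  simp only [PP, map_sub, Pi.sub_apply, sub_smul, Finset.sum_sub_distrib]

theorem PP_smul (e : ℕ+ → X) (c : X →ₗ[ℝ] (ℕ+ → ℝ)) (E : Finset ℕ+) (r : ℝ) (x : X) :
    PP e c E (r • x) = r • PP e c E x := by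
  simp only [PP, map_smul, Pi.smul_apply, smul_eq_mul, mul_smul, Finset.smul_sum]

variable {θ : ℝ} {k n : ℕ} {e : ℕ+ → X} {c : X →ₗ[ℝ] (ℕ+ → ℝ)}

namespace TG

theorem cP (H : TG θ k n e c) (F : Finset ℕ+) (x : X) (i : ℕ+) :
    c (PP e c F x) i = if i ∈ F then c x i else 0 := by
  simp only [PP, map_sum, map_smul, Finset.sum_apply, Pi.smul_apply, H.c_e, smul_eq_mul, mul_ite,
      mul_one, mul_zero]
  simp

theorem ext (H : TG θ k n e c) (x y : X) (h : ∀ i, c x i = c y i) : x = y := by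
  have : ‖x - y‖ ≤ ‖(0:X)‖ := by
    apply H.mono
    intro i
    simp [h i]
  rw [norm_zero] at this
  exact sub_eq_zero.mp (norm_le_zero_iff.mp this)

theorem hk' (H : TG θ k n e c) : (2:ℝ) ≤ k := by exact_mod_cast H.hk

theorem half (H : TG θ k n e c) : θ ≤ 1/2 := by
  have := H.hk'; have := H.hθ; have := H.h0; nlinarith

theorem PP_eq (H : TG θ k n e c) (A : Finset ℕ+) (x : X) (h : ∀ i, i ∉ A → c x i = 0) :
    PP e c A x = x := by
  apply H.ext
  intro i
  rw [H.cP]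
  split_ifs with hi
  · rfl
  · rw [h i hi]

theorem PP_le (H : TG θ k n e c) (E : Finset ℕ+) (x : X) : ‖PP e c E x‖ ≤ ‖x‖ := by
  apply H.mono
  intro i
  rw [H.cP]; split_ifs <;> simp

theorem norm_e (H : TG θ k n e c) (i : ℕ+) : ‖e i‖ = 1 := by
  have hge : 1 ≤ ‖e i‖ := by
    have := H.coord (e i) i
    rw [H.c_e] at this; simpa using this
  have hle : ‖e i‖ ≤ max 1 (θ * ‖e i‖) := by
    apply H.upper
    · intro j
      rw [H.c_e]
      apply le_max_of_le_left
      split_ifs <;> simp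
    · intro d E hE
      apply le_max_of_le_right
      apply mul_le_mul_of_nonneg_left _ H.h0.le
      refine le_trans (Finset.sum_le_sum ?_) (adm_sum_le hE i ‖e i‖ (norm_nonneg _))
      intro a _
      split_ifs with h
      · exact H.PP_le _ _
      · have : PP e c (E a) (e i) = 0 := by
          apply H.ext
          intro j
          rw [H.cP, H.c_e, map_zero]
          by_cases hj : j = i
          · subst hj; simp [h]
          · simp [hj]
        rw [this, norm_zero]
  have := H.half
  rcases le_max_iff.mp hle with h | h
  · linarith
  · nlinarith

theorem PP_sum_le (H : TG θ k n e c) (E : Finset ℕ+) (x : X) : ‖PP e c E x‖ ≤ ∑ i ∈ E, |c x i| := by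
  refine (norm_sum_le _ _).trans (le_of_eq ?_)
  apply Finset.sum_congr rfl
  intro i _
  rw [norm_smul, H.norm_e, mul_one, Real.norm_eq_abs]

theorem L (H : TG θ k n e c) (α : ℝ) (i : ℕ+) (y : X) (hy : c y i = 0) :
    ‖α • e i + y‖ ≤ max |α| (θ * |α| + ‖y‖) := by
  apply H.upper
  · intro j
    rw [map_add, map_smul, Pi.add_apply, Pi.smul_apply, H.c_e]
    by_cases hj : j = i
    · subst hj; simp [hy]
    · apply le_max_of_le_right
      have := H.coord y j
      have h2 : 0 ≤ θ * |α| := mul_nonneg H.h0.le (abs_nonneg _)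
      simp [hj]; linarith
  · intro d E hE
    apply le_max_of_le_right
    have h1 := H.adm y d E hE
    have h2 := mul_le_mul_of_nonneg_left (adm_sum_le hE i |α| (abs_nonneg _)) H.h0.le
    refine le_trans ?_ (add_le_add h2 h1)
    rw [← mul_add, ← Finset.sum_add_distrib]
    apply mul_le_mul_of_nonneg_left _ H.h0.le
    apply Finset.sum_le_sum
    intro a _
    rw [PP_add]
    refine (norm_add_le _ _).trans (add_le_add ?_ le_rfl)
    rw [PP_smul, norm_smul, Real.norm_eq_abs]
    split_ifs with h
    · have := (H.PP_le (E a) (e i)).trans (le_of_eq (H.norm_e i))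
      have h3 := abs_nonneg α
      nlinarith
    · have : PP e c (E a) (e i) = 0 := by
        apply H.ext
        intro j
        rw [H.cP, H.c_e, map_zero]
        by_cases hj : j = i
        · subst hj; simp [h]
        · simp [hj]
      rw [this, norm_zero, mul_zero]

theorem M (H : TG θ k n e c) (α : ℝ) (y : X) (hy : c y 1 = 0) :
    ‖α • e 1 + y‖ = max |α| ‖y‖ := by
  have hcz : ∀ j, c (α • e 1 + y) j = if j = 1 then α else c y j := by
    intro j
    rw [map_add, map_smul, Pi.add_apply, Pi.smul_apply, H.c_e]
    by_cases hj : j = 1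
    · subst hj; simp [hy]
    · simp [hj]
  set z := α • e 1 + y with hz
  apply le_antisymm
  · have hle : ‖z‖ ≤ max (max |α| ‖y‖) (θ * ‖z‖) := by
      apply H.upper
      · intro j
        apply le_max_of_le_left
        rw [hcz]
        split_ifs
        · exact le_max_left _ _
        · exact le_max_of_le_right (H.coord y j)
      · intro d E hE
        by_cases h : ∃ a, 1 ∈ E a
        · obtain ⟨a, ha⟩ := h
          apply le_max_of_le_right
          apply mul_le_mul_of_nonneg_left _ H.h0.le
          obtain ⟨μ, hμ, hS⟩ := hE.2.2
          have hμa : μ a = 1 := le_antisymm ((hμ a).2 ha) (PNat.one_le _)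
          obtain ⟨m, rfl⟩ : ∃ m, n = m + 1 := ⟨n - 1, by have := H.hn; omega⟩
          have hS1 := sch_mem_one m _ hS (by
            rw [← hμa]; exact Finset.mem_image_of_mem _ (Finset.mem_univ _))
          have hall : ∀ b, b = a := by
            intro b
            have : μ b ∈ Finset.univ.image μ := Finset.mem_image_of_mem _ (Finset.mem_univ _)
            rw [hS1, Finset.mem_singleton] at this
            have h2 := (hμ b).1
            rw [this] at h2
            exact adm_disj hE b a 1 h2 ha
          rw [Finset.sum_eq_single a (fun b _ hb => absurd (hall b) hb) (by simp)]
          exact H.PP_le _ _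
        · push Not at h
          apply le_max_of_le_left
          apply le_max_of_le_right
          refine le_trans (le_of_eq ?_) (H.adm y d E hE)
          congr 1
          apply Finset.sum_congr rfl
          intro a _
          congr 1
          apply H.ext
          intro j
          rw [H.cP, H.cP, hcz]
          split_ifs with h1 h2
          · subst h2; exact absurd h1 (h a)
          · rfl
          · rfl
    have h1 := H.half
    have h2 := H.h0
    rcases le_max_iff.mp hle with h | h
    · exact h
    · have : ‖z‖ ≤ 0 := by
        have := norm_nonneg z
        nlinarith
      exact this.trans (le_max_of_le_left (abs_nonneg _))
  · apply max_le
    · have := H.coord z 1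
      rw [hcz] at this; simpa using this
    · apply H.mono
      intro j
      rw [hcz]
      split_ifs with h
      · rw [h, hy]; simp
      · rfl

theorem l1 (H : TG θ k n e c) (x : X) (A : Finset ℕ+) (M : ℝ) (hA : ∀ i, i ∉ A → c x i = 0)
    (hM : ∀ i, |c x i| ≤ M) : ‖x‖ ≤ max M (θ * ∑ i ∈ A, |c x i|) := by
  apply H.upper
  · intro i; exact le_max_of_le_left (hM i)
  · intro d E hE
    apply le_max_of_le_right
    apply mul_le_mul_of_nonneg_left _ H.h0.le
    have : ∀ a, ‖PP e c (E a) x‖ ≤ ∑ i ∈ A, if i ∈ E a then |c x i| else 0 := by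
      intro a
      refine (H.PP_sum_le _ _).trans (le_of_eq ?_)
      rw [← Finset.sum_filter, Finset.filter_mem_eq_inter]
      symm
      apply Finset.sum_subset Finset.inter_subset_right
      intro i hi hi'
      have : i ∉ A := fun h => hi' (Finset.mem_inter.mpr ⟨h, hi⟩)
      rw [hA i this, abs_zero]
    refine (Finset.sum_le_sum (fun a _ => this a)).trans ?_
    rw [Finset.sum_comm]
    exact Finset.sum_le_sum (fun i _ => adm_sum_le hE i _ (abs_nonneg _))

theorem l1k (H : TG θ k n e c) (x : X) (A : Finset ℕ+) (hA : ∀ i, i ∉ A → c x i = 0)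
    (hM : ∀ i, |c x i| ≤ 1) (hk : A.card ≤ k) : ‖x‖ ≤ 1 := by
  refine (H.l1 x A 1 hA hM).trans (max_le le_rfl ?_)
  have h1 : ∑ i ∈ A, |c x i| ≤ A.card := by
    have := Finset.sum_le_sum (s := A) (fun i _ => hM i)
    simpa using this
  have h2 : (A.card : ℝ) ≤ k := by exact_mod_cast hk
  have := H.hθ
  have := H.h0
  nlinarith

theorem lowA (H : TG θ k n e c) (x : X) (A : Finset ℕ+) (hA : A ∈ Schreier n) :
    θ * ∑ i ∈ A, |c x i| ≤ ‖x‖ := by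
  let f := A.orderEmbOfFin rfl
  have himg : Finset.univ.image f = A := by
    ext i
    simp only [Finset.mem_image, Finset.mem_univ, true_and]
    have := A.range_orderEmbOfFin rfl
    rw [← Finset.mem_coe, ← this]; rfl
  have hE : TsAdmissible (Schreier n) (fun a => {f a}) := by
    refine ⟨fun _ => Finset.singleton_nonempty _, ?_, f, ?_, ?_⟩
    · intro i j hij a ha b hb
      rw [Finset.mem_singleton] at ha hb
      rw [ha, hb]; exact f.strictMono hij
    · intro i; simp
    · rw [himg]; exact hA
  refine le_trans (le_of_eq ?_) (H.adm x _ _ hE)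
  congr 1
  conv_lhs => rw [← himg]
  rw [Finset.sum_image (fun a _ b _ h => f.injective h)]
  apply Finset.sum_congr rfl
  intro a _
  simp only [PP, Finset.sum_singleton]
  rw [norm_smul, H.norm_e, mul_one, Real.norm_eq_abs]

theorem cpair (H : TG θ k n e c) (a b : ℝ) (i j : ℕ+) (l : ℕ+) : c (a • e i + b • e j) l =
    (if l = i then a else 0) + (if l = j then b else 0) := by
  simp [H.c_e]

theorem pair (H : TG θ k n e c) (a b : ℝ) (ha : |a| ≤ 1) (hb : |b| ≤ 1) (i j : ℕ+) (hij : i ≠ j) :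
    ‖a • e i + b • e j‖ ≤ 1 := by
  apply H.l1k _ {i, j}
  · intro l hl
    simp only [Finset.mem_insert, Finset.mem_singleton, not_or] at hl
    rw [H.cpair]; simp [hl.1, hl.2]
  · intro l
    rw [H.cpair]
    by_cases h1 : l = i
    · have : l ≠ j := fun h => hij (h1.symm.trans h)
      simp [h1, hij, ha]
    · by_cases h2 : l = j
      · simp [h2, Ne.symm hij, hb]
      · simp [h1, h2]
  · exact (Finset.card_insert_le _ _).trans (by simpa using H.hk)

end TG
end


theorem vais_aux {D : Type*} [MetricSpace D] (m : D) (R : D ≃ᵢ D) (h1 : ∀ x, dist (R x) m = dist x m)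
    (h2 : ∀ x, dist (R x) x = 2 * dist x m) (B : ℝ) (hB : ∀ g : D ≃ᵢ D, dist (g m) m ≤ B)
    (g : D ≃ᵢ D) : g m = m := by
  have key : ∀ j : ℕ, ∀ g : D ≃ᵢ D, dist (g m) m ≤ B * (1/2)^j := by
    intro j
    induction j with
    | zero => intro g; simpa using hB g
    | succ j ih =>
      intro g
      have h := ih (((g.trans R).trans g.symm).trans R)
      simp only [IsometryEquiv.trans_apply] at h
      rw [h1] at h
      have h3 : dist (g.symm (R (g m))) m = dist (R (g m)) (g m) := by
        rw [← g.isometry.dist_eq]; simp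
      rw [h3, h2] at h
      rw [pow_succ]; linarith
  have hl : Filter.Tendsto (fun j : ℕ => B * (1/2:ℝ)^j) Filter.atTop (nhds (B * 0)) :=
    (tendsto_pow_atTop_nhds_zero_of_lt_one (by norm_num) (by norm_num)).const_mul B
  rw [mul_zero] at hl
  have := ge_of_tendsto' hl (fun j => key j g)
  exact dist_le_zero.mp this

section
variable {E : Type*} [NormedAddCommGroup E] [NormedSpace ℝ E]

/-- mutually inverse isometries of the unit ball -/
structure BI (f g : E → E) : Prop where
  fb : ∀ x, ‖x‖ ≤ 1 → ‖f x‖ ≤ 1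
  gb : ∀ x, ‖x‖ ≤ 1 → ‖g x‖ ≤ 1
  gf : ∀ x, ‖x‖ ≤ 1 → g (f x) = x
  fg : ∀ x, ‖x‖ ≤ 1 → f (g x) = x
  iso : ∀ x y, ‖x‖ ≤ 1 → ‖y‖ ≤ 1 → ‖f x - f y‖ = ‖x - y‖
  f0 : f 0 = 0

theorem BI.symm {f g : E → E} (h : BI f g) : BI g f where
  fb := h.gb
  gb := h.fb
  gf := h.fg
  fg := h.gf
  iso := by
    intro x y hx hy
    rw [← h.iso _ _ (h.gb x hx) (h.gb y hy), h.fg x hx, h.fg y hy]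
  f0 := by
    have := h.gf 0 (by simp)
    rwa [h.f0] at this

theorem BI.nrm {f g : E → E} (h : BI f g) (x : E) (hx : ‖x‖ ≤ 1) : ‖f x‖ = ‖x‖ := by
  have := h.iso x 0 hx (by simp)
  simpa [h.f0] using this

/-- the lens -/
def lens (x : E) : Set E := {z | ‖z‖ ≤ ‖x‖ / 2 ∧ ‖z - x‖ ≤ ‖x‖ / 2}

def lensR (x : E) : lens x ≃ᵢ lens x where
  toFun z := ⟨x - z, by
    obtain ⟨h1, h2⟩ := z.2
    refine ⟨by rw [norm_sub_rev]; exact h2, by simpa using h1⟩⟩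
  invFun z := ⟨x - z, by
    obtain ⟨h1, h2⟩ := z.2
    refine ⟨by rw [norm_sub_rev]; exact h2, by simpa using h1⟩⟩
  left_inv z := by ext; simp
  right_inv z := by ext; simp
  isometry_toFun := by
    apply Isometry.of_dist_eq
    intro z w
    simp only [Subtype.dist_eq, dist_eq_norm]
    rw [sub_sub_sub_cancel_left, norm_sub_rev]

def lensF {f g : E → E} (h : BI f g) (x : E) (hx : ‖x‖ ≤ 1) : lens x ≃ᵢ lens (f x) where
  toFun z := ⟨f z, by
    obtain ⟨h1, h2⟩ := z.2
    have hz : ‖(z:E)‖ ≤ 1 := by linarith [norm_nonneg x]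
    refine ⟨by rw [h.nrm _ hz, h.nrm _ hx]; exact h1, by
      rw [h.iso _ _ hz hx, h.nrm _ hx]; exact h2⟩⟩
  invFun z := ⟨g z, by
    obtain ⟨h1, h2⟩ := z.2
    rw [h.nrm _ hx] at h1 h2
    have hz : ‖(z:E)‖ ≤ 1 := by linarith [norm_nonneg x]
    refine ⟨by rw [h.symm.nrm _ hz]; exact h1, by
      rw [← h.iso _ _ (h.gb _ hz) hx, h.fg _ hz]; exact h2⟩⟩
  left_inv z := by
    obtain ⟨h1, h2⟩ := z.2
    have hz : ‖(z:E)‖ ≤ 1 := by linarith [norm_nonneg x]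
    ext; exact h.gf _ hz
  right_inv z := by
    obtain ⟨h1, h2⟩ := z.2
    rw [h.nrm _ hx] at h1 h2
    have hz : ‖(z:E)‖ ≤ 1 := by linarith [norm_nonneg x]
    ext; exact h.fg _ hz
  isometry_toFun := by
    apply Isometry.of_dist_eq
    intro z w
    obtain ⟨h1, h2⟩ := z.2
    obtain ⟨h3, h4⟩ := w.2
    have hz : ‖(z:E)‖ ≤ 1 := by linarith [norm_nonneg x]
    have hw : ‖(w:E)‖ ≤ 1 := by linarith [norm_nonneg x]
    simp only [Subtype.dist_eq, dist_eq_norm]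
    exact h.iso _ _ hz hw

theorem BI.half {f g : E → E} (h : BI f g) (x : E) (hx : ‖x‖ ≤ 1) :
    f ((1/2 : ℝ) • x) = (1/2 : ℝ) • f x := by
  have hm : (1/2:ℝ) • x ∈ lens x := by
    constructor
    · rw [norm_smul]; simp; linarith
    · have : (1/2:ℝ) • x - x = -((1/2:ℝ) • x) := by module
      rw [this, norm_neg, norm_smul]; simp; linarith
  let m : lens x := ⟨(1/2:ℝ) • x, hm⟩
  have hfix := vais_aux m (lensR x) (by
      intro z
      simp only [Subtype.dist_eq, dist_eq_norm, lensR, m]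
      change ‖x - (z:E) - (1/2:ℝ) • x‖ = _
      rw [← norm_neg]; congr 1; module) (by
      intro z
      simp only [Subtype.dist_eq, dist_eq_norm, lensR, m]
      change ‖x - (z:E) - (z:E)‖ = _
      rw [← norm_neg]
      have : -(x - (z:E) - z) = (2:ℝ) • ((z:E) - (1/2:ℝ) • x) := by module
      rw [this, norm_smul]; simp) 2 (by
      intro G
      have h1 := (G m).2.1
      rw [Subtype.dist_eq, dist_eq_norm]
      have h2 := norm_sub_le ((G m : E)) (m : E)
      have h3 := m.2.1
      linarith)
    ((((lensF h x hx).trans (lensR (f x))).trans (lensF h x hx).symm).trans (lensR x))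
  simp only [IsometryEquiv.trans_apply] at hfix
  have h1 : (lensR x) m = m := by
    ext; change x - (1/2:ℝ) • x = (1/2:ℝ) • x; module
  have h2 := (lensR x).injective (hfix.trans h1.symm)
  rw [IsometryEquiv.symm_apply_eq] at h2
  have h3 : f x - f ((1/2:ℝ) • x) = f ((1/2:ℝ) • x) := congrArg Subtype.val h2
  have h4 : f x = (2:ℝ) • f ((1/2:ℝ) • x) := by
    rw [sub_eq_iff_eq_add] at h3
    rw [two_smul]; exact h3
  rw [h4, smul_smul]; norm_num

theorem BI.pow {f g : E → E} (h : BI f g) (j : ℕ) (x : E) (hx : ‖x‖ ≤ 1) :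
    f ((1/2 : ℝ)^j • x) = (1/2 : ℝ)^j • f x := by
  induction j with
  | zero => simp
  | succ j ih =>
    have hn : ‖(1/2 : ℝ)^j • x‖ ≤ 1 := by
      rw [norm_smul, norm_pow]
      have : ‖(1/2:ℝ)‖^j ≤ 1 := pow_le_one₀ (norm_nonneg _) (by norm_num)
      exact mul_le_one₀ this (norm_nonneg _) hx
    rw [pow_succ', mul_smul, h.half _ hn, ih, mul_smul]

def NN (x : E) : ℕ := ⌈‖x‖⌉₊

theorem NN_le (x : E) (j : ℕ) (hj : NN x ≤ j) : ‖(1/2:ℝ)^j • x‖ ≤ 1 := by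
  have h1 : ‖x‖ ≤ (NN x : ℝ) := Nat.le_ceil _
  have h2 : (NN x : ℝ) ≤ j := by exact_mod_cast hj
  have h3 : (j : ℝ) ≤ 2^j := by exact_mod_cast (Nat.lt_two_pow_self (n := j)).le
  rw [norm_smul, norm_pow]
  have h4 : ‖(1/2:ℝ)‖^j * 2^j = 1 := by rw [← mul_pow]; norm_num
  have h5 : 0 ≤ ‖(1/2:ℝ)‖^j := by positivity
  nlinarith

def TT (f : E → E) (x : E) : E := (2:ℝ)^(NN x) • f ((1/2:ℝ)^(NN x) • x)

theorem two_half (j : ℕ) : (2:ℝ)^j * (1/2)^j = 1 := by rw [← mul_pow]; norm_num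

theorem BI.TT_eq {f g : E → E} (h : BI f g) (x : E) (j : ℕ) (hj : NN x ≤ j) :
    TT f x = (2:ℝ)^j • f ((1/2:ℝ)^j • x) := by
  obtain ⟨i, rfl⟩ := Nat.exists_eq_add_of_le hj
  rw [pow_add (1/2:ℝ), mul_comm ((1/2:ℝ)^(NN x)), mul_smul, h.pow i _ (NN_le x _ le_rfl), smul_smul,
    pow_add, mul_assoc, two_half, mul_one]
  rfl

theorem BI.TT_ball {f g : E → E} (h : BI f g) (x : E) (hx : ‖x‖ ≤ 1) : TT f x = f x := by
  rw [TT, h.pow _ _ hx, smul_smul, two_half, one_smul]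

theorem BI.TT_iso {f g : E → E} (h : BI f g) (x y : E) : ‖TT f x - TT f y‖ = ‖x - y‖ := by
  let j := max (NN x) (NN y)
  rw [h.TT_eq x j (le_max_left _ _), h.TT_eq y j (le_max_right _ _), ← smul_sub, norm_smul,
    h.iso _ _ (NN_le x j (le_max_left _ _)) (NN_le y j (le_max_right _ _)), ← norm_smul, ← smul_sub,
    smul_smul, two_half, one_smul]

theorem BI.TT_inv {f g : E → E} (h : BI f g) (x : E) : TT g (TT f x) = x := by
  let j := max (NN x) (NN (TT f x))
  rw [h.symm.TT_eq _ j (le_max_right _ _), h.TT_eq x j (le_max_left _ _), smul_smul,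
    mul_comm ((1/2:ℝ)^j), two_half, one_smul, h.gf _ (NN_le x j (le_max_left _ _)), smul_smul,
    two_half, one_smul]

theorem ball_MU {f g : E → E} (h : BI f g) : ∃ T : E ≃ₗᵢ[ℝ] E, ∀ x, ‖x‖ ≤ 1 → T x = f x := by
  let T0 : E ≃ᵢ E :=
    { toFun := TT f
      invFun := TT g
      left_inv := h.TT_inv
      right_inv := h.symm.TT_inv
      isometry_toFun := Isometry.of_dist_eq (fun x y => by
        rw [dist_eq_norm, dist_eq_norm]; exact h.TT_iso x y) }
  have h0 : T0 0 = 0 := by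
    change TT f 0 = 0
    rw [h.TT_ball 0 (by simp), h.f0]
  refine ⟨T0.toRealLinearIsometryEquivOfMapZero h0, ?_⟩
  intro x hx
  exact h.TT_ball x hx
end


section
variable {X : Type*} [NormedAddCommGroup X] [NormedSpace ℝ X]
variable {θ : ℝ} {k n : ℕ} {e : ℕ+ → X} {c : X →ₗ[ℝ] (ℕ+ → ℝ)}

namespace TG

theorem peak (H : TG θ k n e c) (T : X ≃ₗᵢ[ℝ] X) (i : ℕ+) (h : X) (hh : ‖h‖ ≤ 1/4) :
    ‖T (e i) + h‖ = 1 + c (T.symm h) i := by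
  set u := T.symm h with hu
  have hun : ‖u‖ ≤ 1/4 := by rw [hu, LinearIsometryEquiv.norm_map]; exact hh
  have h1 : ‖T (e i) + h‖ = ‖e i + u‖ := by
    rw [← LinearIsometryEquiv.norm_map T (e i + u), map_add, hu, LinearIsometryEquiv.apply_symm_apply]
  rw [h1]
  have hui := (H.coord u i).trans hun
  have hui' := abs_le.mp hui
  let y := u - c u i • e i
  have hy : c y i = 0 := by simp [y, H.c_e]
  have hyn : ‖y‖ ≤ 1/4 := by
    refine le_trans (H.mono y u ?_) hun
    intro j
    simp only [y, map_sub, map_smul, Pi.sub_apply, Pi.smul_apply, H.c_e]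
    by_cases hj : j = i
    · subst hj; simp
    · simp [hj]
  have heq : e i + u = (1 + c u i) • e i + y := by simp only [y]; module
  have hth := H.half
  apply le_antisymm
  · rw [heq]
    refine (H.L _ i y hy).trans ?_
    rw [abs_of_nonneg (by linarith)]
    apply max_le le_rfl
    nlinarith
  · have := H.coord (e i + u) i
    rw [map_add, Pi.add_apply, H.c_e, if_pos rfl] at this
    exact (le_abs_self _).trans this

theorem rigid (H : TG θ k n e c) (T : X ≃ₗᵢ[ℝ] X) (i : ℕ+) (ψ : X → ℝ)
    (hsub : ∀ x y, ψ (x + y) ≤ ψ x + ψ y) (h2 : ∀ x, ψ ((2:ℝ) • x) = 2 * ψ x) (hle : ∀ x, ψ x ≤ ‖x‖)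
    (w' : X) (hw : ‖w' - T (e i)‖ ≤ 1/16) (hψ : ψ w' = ‖w'‖) (h : X) (hh : ‖h‖ ≤ 1/8) :
    ψ (T (e i) + h) = 1 + c (T.symm h) i := by
  set w := T (e i) with hwdef
  set d := w' - w with hd
  have hw' : w' = w + d := by rw [hd]; abel
  have e1 : ‖w'‖ = 1 + c (T.symm d) i := by
    rw [hw']; exact H.peak T i d (by linarith)
  apply le_antisymm
  · rw [← H.peak T i h (by linarith)]; exact hle _
  · have h3 : (2:ℝ) • w' = (w + h) + (w + ((2:ℝ) • d - h)) := by rw [hw']; module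
    have h4 := hsub (w + h) (w + ((2:ℝ) • d - h))
    rw [← h3, h2, hψ, e1] at h4
    have hn : ‖(2:ℝ) • d - h‖ ≤ 1/4 := by
      refine (norm_sub_le _ _).trans ?_
      rw [norm_smul]; simp; linarith
    have h5 := hle (w + ((2:ℝ) • d - h))
    rw [hwdef, H.peak T i _ hn] at h5
    simp only [map_sub, map_smul, Pi.sub_apply, Pi.smul_apply, smul_eq_mul] at h5
    linarith

theorem lim (H : TG θ k n e c) (x : X) :
    Filter.Tendsto (fun F => PP e c F x) Filter.atTop (nhds x) := H.hs x

theorem approx (H : TG θ k n e c) (x : X) (r : ℝ) (hr : 0 < r) : ∃ F, ‖PP e c F x - x‖ ≤ r := by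
  have := (Metric.tendsto_nhds.mp (H.lim x) r hr).exists
  obtain ⟨F, hF⟩ := this
  exact ⟨F, by rw [← dist_eq_norm]; exact hF.le⟩

/-- admissible functional -/
def psi (θ : ℝ) (e : ℕ+ → X) (c : X →ₗ[ℝ] (ℕ+ → ℝ)) {d : ℕ} (E : Fin d → Finset ℕ+) (x : X) : ℝ :=
  θ * ∑ a, ‖PP e c (E a) x‖

theorem psi_sub (H : TG θ k n e c) {d : ℕ} (E : Fin d → Finset ℕ+) (x y : X) :
    psi θ e c E (x + y) ≤ psi θ e c E x + psi θ e c E y := by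
  unfold psi
  rw [← mul_add, ← Finset.sum_add_distrib]
  apply mul_le_mul_of_nonneg_left _ H.h0.le
  apply Finset.sum_le_sum
  intro a _
  rw [PP_add]; exact norm_add_le _ _

theorem psi_two {d : ℕ} (E : Fin d → Finset ℕ+) (x : X) :
    psi θ e c E ((2:ℝ) • x) = 2 * psi θ e c E x := by
  unfold psi
  have : ∀ a, ‖PP e c (E a) ((2:ℝ) • x)‖ = 2 * ‖PP e c (E a) x‖ := by
    intro a; rw [PP_smul, norm_smul]; simp
  simp only [this]
  rw [← Finset.mul_sum]; ring

theorem scale_small (x : X) : ∃ r : ℝ, 0 < r ∧ ‖r • x‖ ≤ 1/8 := by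
  have hx := norm_nonneg x
  refine ⟨1/(8*(‖x‖+1)), by positivity, ?_⟩
  rw [norm_smul, Real.norm_of_nonneg (by positivity), div_mul_eq_mul_div, one_mul, div_le_div_iff₀ (by positivity) (by norm_num)]
  nlinarith

theorem B0 (H : TG θ k n e c) (T : X ≃ₗᵢ[ℝ] X) (i : ℕ+) :
    (∃ j, ∃ η : ℝ, (η = 1 ∨ η = -1) ∧ ∀ x, c (T.symm x) i = η * c x j) ∨
    ∃ (d : ℕ) (E : Fin d → Finset ℕ+), TsAdmissible (Schreier n) E ∧
      ∀ h, ‖h‖ ≤ 1/8 → psi θ e c E (T (e i) + h) = 1 + c (T.symm h) i := by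
  obtain ⟨F, hF⟩ := H.approx (T (e i)) (1/16) (by norm_num)
  have hPF : PP e c F (PP e c F (T (e i))) = PP e c F (T (e i)) := by
    apply H.PP_eq
    intro l hl
    rw [H.cP, if_neg hl]
  rcases H.att _ F hPF with ⟨j, hj⟩ | ⟨d, E, hE, hd⟩
  · left
    have hr := H.rigid T i (fun x => |c x j|) (by
      intro x y
      rw [map_add, Pi.add_apply]; exact abs_add_le _ _) (by
      intro x; rw [map_smul, Pi.smul_apply, smul_eq_mul, abs_mul]; simp) (fun x => H.coord x j) _ hF hj
    have h0 := hr 0 (by simp)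
    simp only [add_zero, map_zero, Pi.zero_apply] at h0
    have hη : c (T (e i)) j = 1 ∨ c (T (e i)) j = -1 := by
      exact (abs_eq zero_le_one).mp h0
    refine ⟨j, c (T (e i)) j, hη, ?_⟩
    intro x
    obtain ⟨r, hr0, hrx⟩ := scale_small x
    have h1 := hr (r • x) hrx
    have h2 := abs_le.mp ((H.coord (r • x) j).trans hrx)
    simp only [map_add, map_smul, Pi.add_apply, Pi.smul_apply, smul_eq_mul] at h1 h2
    apply mul_left_cancel₀ hr0.ne'
    rcases hη with h | h
    · rw [h] at h1 ⊢
      rw [abs_of_nonneg (by linarith)] at h1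
      linarith
    · rw [h] at h1 ⊢
      rw [abs_of_nonpos (by linarith)] at h1
      linarith
  · right
    refine ⟨d, E, hE, ?_⟩
    exact H.rigid T i (psi θ e c E) (H.psi_sub E) (psi_two E) (fun x => H.adm x d E hE) _ hF hd

theorem PP_zero_of (c : X →ₗ[ℝ] (ℕ+ → ℝ)) (E : Finset ℕ+) (x : X) (h : ∀ l ∈ E, c x l = 0) :
    PP e c E x = 0 := by
  unfold PP
  apply Finset.sum_eq_zero
  intro i hi
  rw [h i hi, zero_smul]

theorem B1 (H : TG θ k n e c) (T : X ≃ₗᵢ[ℝ] X) (i : ℕ+) :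
    ∃ N : Finset ℕ+, ∀ x, (∀ l ∈ N, c x l = 0) → c (T.symm x) i = 0 := by
  rcases H.B0 T i with ⟨j, η, _, h⟩ | ⟨d, E, hE, h⟩
  · refine ⟨{j}, fun x hx => ?_⟩
    rw [h x, hx j (Finset.mem_singleton_self j), mul_zero]
  · refine ⟨Finset.univ.biUnion E, fun x hx => ?_⟩
    obtain ⟨r, hr0, hrx⟩ := scale_small x
    have h1 := h _ hrx
    have h2 := h 0 (by simp)
    have h3 : psi θ e c E (T (e i) + r • x) = psi θ e c E (T (e i) + 0) := by
      unfold psi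
      congr 1
      apply Finset.sum_congr rfl
      intro a _
      rw [add_zero, PP_add, PP_smul, PP_zero_of c (E a) x, smul_zero, add_zero]
      intro l hl
      exact hx l (Finset.mem_biUnion.mpr ⟨a, Finset.mem_univ _, hl⟩)
    rw [h1, h2] at h3
    simp only [map_zero, map_smul, Pi.smul_apply, Pi.zero_apply, smul_eq_mul, add_zero] at h3
    have : r * c (T.symm x) i = 0 := by linarith
    rcases mul_eq_zero.mp this with h | h
    · exact absurd h hr0.ne'
    · exact h

theorem shift_adm (H : TG θ k n e c) (m : ℕ) (E : Fin (m+1) → Finset ℕ+)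
    (hE : TsAdmissible (Schreier n) E) (G : Finset ℕ+) (hG : G.Nonempty)
    (hM : ∀ a, ∀ l ∈ E a, ∀ g ∈ G, l < g) :
    TsAdmissible (Schreier n)
      (Fin.snoc (α := fun _ => Finset ℕ+) (fun a : Fin m => E a.succ) G) := by
  obtain ⟨q, rfl⟩ : ∃ q, n = q + 1 := ⟨n - 1, by have := H.hn; omega⟩
  obtain ⟨hne, hlt, μ, hμ, hS⟩ := hE
  let μ' : Fin (m+1) → ℕ+ := Fin.snoc (α := fun _ => ℕ+) (fun a : Fin m => μ a.succ) (G.min' hG)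
  have hlt' : ∀ i j : Fin (m+1), i < j →
      ∀ a ∈ (Fin.snoc (α := fun _ => Finset ℕ+) (fun a : Fin m => E a.succ) G : Fin (m+1) → Finset ℕ+) i,
      ∀ b ∈ (Fin.snoc (α := fun _ => Finset ℕ+) (fun a : Fin m => E a.succ) G : Fin (m+1) → Finset ℕ+) j,
        a < b := by
    intro i j
    induction i using Fin.lastCases with
    | last =>
      intro h; exact absurd h (not_lt.mpr (Fin.le_last j))
    | cast i =>
      induction j using Fin.lastCases with
      | last =>
        intro _ a ha b hb
        rw [Fin.snoc_castSucc] at ha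
        rw [Fin.snoc_last] at hb
        exact hM _ a ha b hb
      | cast j =>
        intro h a ha b hb
        rw [Fin.snoc_castSucc] at ha hb
        exact hlt _ _ (Fin.succ_lt_succ_iff.mpr (by simpa using h)) a ha b hb
  have hμ' : ∀ i, IsLeast (↑((Fin.snoc (α := fun _ => Finset ℕ+) (fun a : Fin m => E a.succ) G :
      Fin (m+1) → Finset ℕ+) i) : Set ℕ+) (μ' i) := by
    intro i
    induction i using Fin.lastCases with
    | last => simp only [μ', Fin.snoc_last]; exact Finset.isLeast_min' G hG
    | cast i => simp only [μ', Fin.snoc_castSucc]; exact hμ _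
  refine ⟨?_, hlt', μ', hμ', ?_⟩
  · intro i
    exact ⟨μ' i, (hμ' i).1⟩
  · apply sch_spread_idx q μ' μ Finset.univ (Finset.univ.image μ) hS
    · intro i _; exact Finset.mem_image_of_mem _ (Finset.mem_univ _)
    · intro i _ j _ hij; exact hlt i j hij _ (hμ i).1 _ (hμ j).1
    · intro i _ j _ hij; exact hlt' i j hij _ (hμ' i).1 _ (hμ' j).1
    · intro i _
      induction i using Fin.lastCases with
      | last =>
        simp only [μ', Fin.snoc_last]
        exact (hM _ _ (hμ _).1 _ (Finset.min'_mem G hG)).le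
      | cast i =>
        simp only [μ', Fin.snoc_castSucc]
        exact (hlt _ _ (by simp [Fin.lt_def]) _ (hμ _).1 _ (hμ _).1).le

theorem B2 (H : TG θ k n e c) (T : X ≃ₗᵢ[ℝ] X) (i : ℕ+) :
    ∃ j, ∃ η : ℝ, (η = 1 ∨ η = -1) ∧ ∀ x, c (T.symm x) i = η * c x j := by
  rcases H.B0 T i with h | ⟨d, E, hE, h⟩
  · exact h
  exfalso
  set w := T (e i) with hw
  have hwn : ‖w‖ = 1 := by rw [hw, LinearIsometryEquiv.norm_map, H.norm_e]
  have hψw : psi θ e c E w = 1 := by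
    have := h 0 (by simp)
    simpa using this
  cases d with
  | zero => simp [psi] at hψw
  | succ d =>
  have h0 := H.h0
  have hhalf := H.half
  by_cases ht : ‖PP e c (E 0) w‖ = 1
  · have hr := H.rigid T i (fun x => ‖PP e c (E 0) x‖) (by
      intro x y; rw [PP_add]; exact norm_add_le _ _) (by
      intro x; rw [PP_smul, norm_smul]; simp) (fun x => H.PP_le _ x) w (by
      rw [← hw, sub_self, norm_zero]; norm_num) (by rw [ht, hwn])
    set p := (1/8:ℝ) • PP e c (E 0) w with hp
    have hpn : ‖p‖ ≤ 1/8 := by rw [hp, norm_smul, ht]; norm_num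
    have h1 := hr p hpn
    have h2 := h p hpn
    rw [← h1] at h2
    have hPPP : ∀ a, PP e c (E a) (PP e c (E 0) w) = if a = 0 then PP e c (E 0) w else 0 := by
      intro a
      split_ifs with ha
      · subst ha
        apply H.PP_eq
        intro l hl; rw [H.cP, if_neg hl]
      · apply PP_zero_of
        intro l hl
        rw [H.cP, if_neg]
        intro hl0
        exact ha (adm_disj hE a 0 l hl hl0)
    have e1 : ‖PP e c (E 0) (w + p)‖ = 1 + 1/8 := by
      rw [PP_add, hp, PP_smul, hPPP, if_pos rfl]
      have : PP e c (E 0) w + (1/8:ℝ) • PP e c (E 0) w = (1 + 1/8 : ℝ) • PP e c (E 0) w := by module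
      rw [this, norm_smul, ht]; norm_num
    have e2 : psi θ e c E (w + p) = psi θ e c E w + θ * (1/8) := by
      unfold psi
      rw [Fin.sum_univ_succ, Fin.sum_univ_succ, e1, ht]
      have : ∀ a : Fin d, PP e c (E a.succ) (w + p) = PP e c (E a.succ) w := by
        intro a
        rw [PP_add, hp, PP_smul, hPPP, if_neg (Fin.succ_ne_zero a), smul_zero, add_zero]
      simp only [this]
      ring
    rw [e2, e1, hψw] at h2
    linarith
  · -- second case
    have htle : ‖PP e c (E 0) w‖ ≤ 1 := hwn ▸ H.PP_le (E 0) w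
    have htlt : ‖PP e c (E 0) w‖ < 1 := lt_of_le_of_ne htle ht
    have hNE : (Finset.univ.biUnion E).Nonempty := by
      obtain ⟨l, hl⟩ := hE.1 0
      exact ⟨l, Finset.mem_biUnion.mpr ⟨0, Finset.mem_univ _, hl⟩⟩
    set M := (Finset.univ.biUnion E).max' hNE with hM
    have hMle : ∀ a, ∀ l ∈ E a, l ≤ M := fun a l hl =>
      Finset.le_max' _ _ (Finset.mem_biUnion.mpr ⟨a, Finset.mem_univ _, hl⟩)
    choose N hN using fun l => H.B1 T.symm l
    obtain ⟨m, hm⟩ := Infinite.exists_notMem_finset (insert i ((Finset.Iic M).biUnion N))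
    rw [Finset.mem_insert, not_or] at hm
    obtain ⟨hmi, hmN⟩ := hm
    set z := T (e m) with hz
    have hz0 : ∀ l, l ≤ M → c z l = 0 := by
      intro l hl
      have := hN l (e m) (by
        intro l' hl'
        rw [H.c_e, if_neg]
        rintro rfl
        exact hmN (Finset.mem_biUnion.mpr ⟨l, Finset.mem_Iic.mpr hl, hl'⟩))
      simpa using this
    have hzn : ‖z‖ = 1 := by rw [hz, LinearIsometryEquiv.norm_map, H.norm_e]
    have hp : ‖w + z‖ ≤ 1 := by
      rw [hw, hz, ← map_add, LinearIsometryEquiv.norm_map]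
      have := H.pair 1 1 (by simp) (by simp) i m (Ne.symm hmi)
      simpa using this
    have hmn : ‖w - z‖ ≤ 1 := by
      rw [hw, hz, ← map_sub, LinearIsometryEquiv.norm_map]
      have := H.pair 1 (-1) (by simp) (by simp) i m (Ne.symm hmi)
      simpa [sub_eq_add_neg] using this
    have hF : ∀ F, ‖PP e c F z‖ ≤ ‖PP e c (E 0) w‖ := by
      intro F
      set G := F.filter (fun l => M < l) with hG
      have hPG : PP e c F z = PP e c G z := by
        apply H.ext
        intro l
        rw [H.cP, H.cP, hG]
        by_cases hl : M < l
        · simp [hl]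
        · simp [hl, hz0 l (not_lt.mp hl)]
      rw [hPG]
      by_cases hGn : G.Nonempty
      · have hadm := H.shift_adm d E hE G hGn (by
          intro a l hl g hg
          exact lt_of_le_of_lt (hMle a l hl) (Finset.mem_filter.mp hg).2)
        have h1 := (H.adm (w + z) _ _ hadm).trans hp
        have h2 := (H.adm (w - z) _ _ hadm).trans hmn
        rw [Fin.sum_univ_castSucc] at h1 h2
        simp only [Fin.snoc_castSucc, Fin.snoc_last] at h1 h2
        have hPz : ∀ a, PP e c (E a) z = 0 := fun a => PP_zero_of c _ _ (fun l hl => hz0 l (hMle a l hl))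
        simp only [PP_add, PP_sub, hPz, add_zero, sub_zero] at h1 h2
        have h3 : 2 * ‖PP e c G z‖ ≤ ‖PP e c G w + PP e c G z‖ + ‖PP e c G w - PP e c G z‖ := by
          have := norm_sub_le (PP e c G w + PP e c G z) (PP e c G w - PP e c G z)
          have h4 : (PP e c G w + PP e c G z) - (PP e c G w - PP e c G z) = (2:ℝ) • PP e c G z := by module
          rw [h4, norm_smul] at this
          simpa using this
        unfold psi at hψw
        rw [Fin.sum_univ_succ] at hψw
        by_contra hcon
        push Not at hcon
        nlinarith
      · rw [Finset.not_nonempty_iff_eq_empty.mp hGn]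
        simp [PP]
    have := le_of_tendsto' (H.lim z).norm hF
    linarith

/-- indicator -/
def ind (e : ℕ+ → X) (A : Finset ℕ+) : X := ∑ a ∈ A, e a

theorem c_ind (H : TG θ k n e c) (A : Finset ℕ+) (i : ℕ+) :
    c (ind e A) i = if i ∈ A then 1 else 0 := by
  simp [ind, map_sum, Finset.sum_apply, H.c_e]

theorem ind_le (H : TG θ k n e c) (A : Finset ℕ+) : ‖ind e A‖ ≤ A.card := by
  refine (norm_sum_le _ _).trans ?_
  simp [H.norm_e]

theorem ind_lt (H : TG θ k n e c) (A : Finset ℕ+) (p q : ℕ+) (hp : p ∈ A) (hq : q ∈ A) (hpq : p ≠ q) :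
    ‖ind e A‖ < A.card := by
  have h1 : ind e A = (e p + e q) + ind e ((A.erase p).erase q) := by
    unfold ind
    rw [add_assoc, Finset.add_sum_erase _ _ (Finset.mem_erase.mpr ⟨Ne.symm hpq, hq⟩),
      Finset.add_sum_erase _ _ hp]
  have h2 := H.pair 1 1 (by simp) (by simp) p q hpq
  simp only [one_smul] at h2
  have h3 := H.ind_le ((A.erase p).erase q)
  have h4 : ((A.erase p).erase q).card + 2 = A.card := by
    have a1 := Finset.card_erase_add_one hp
    have a2 := Finset.card_erase_add_one (Finset.mem_erase.mpr ⟨Ne.symm hpq, hq⟩)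
    omega
  have h5 : (A.card : ℝ) = ((A.erase p).erase q).card + 2 := by exact_mod_cast h4.symm
  have h6 := norm_add_le (e p + e q) (ind e ((A.erase p).erase q))
  rw [h1]; linarith

theorem ind_mem (H : TG θ k n e c) (A : Finset ℕ+) (hk : k < A.card) (hA : θ * A.card ≤ ‖ind e A‖) :
    A ∈ Schreier n := by
  have h0 := H.h0
  have hPP : PP e c A (ind e A) = ind e A := by
    apply H.PP_eq; intro i hi; rw [H.c_ind, if_neg hi]
  rcases H.att _ A hPP with ⟨i, hi⟩ | ⟨d, E, hE, h⟩
  · exfalso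
    have h1 : |c (ind e A) i| ≤ 1 := by rw [H.c_ind]; split_ifs <;> simp
    have h2 : (k:ℝ) < A.card := by exact_mod_cast hk
    have := H.hθ
    nlinarith
  · have hPE : ∀ a, PP e c (E a) (ind e A) = ind e (A ∩ E a) := by
      intro a
      apply H.ext
      intro i
      rw [H.cP, H.c_ind, H.c_ind]
      by_cases h1 : i ∈ A <;> by_cases h2 : i ∈ E a <;> simp [h1, h2]
    simp only [hPE] at h
    have hcard : ∀ a, ((A ∩ E a).card : ℝ) = ∑ i ∈ A, if i ∈ E a then (1:ℝ) else 0 := by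
      intro a
      rw [← Finset.sum_filter, Finset.filter_mem_eq_inter]; simp
    have hge : (A.card : ℝ) ≤ ∑ a, ‖ind e (A ∩ E a)‖ := by
      rw [← h] at hA
      exact le_of_mul_le_mul_left hA h0
    have hsum : ∑ a, ((A ∩ E a).card : ℝ) = ∑ i ∈ A, ∑ a, if i ∈ E a then (1:ℝ) else 0 := by
      simp only [hcard]; exact Finset.sum_comm
    have hsum1 : ∑ i ∈ A, ∑ a, (if i ∈ E a then (1:ℝ) else 0) ≤ A.card := by
      refine (Finset.sum_le_sum (fun i _ => adm_sum_le hE i 1 zero_le_one)).trans ?_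
      simp
    have hcov : ∀ i ∈ A, ∃ a, i ∈ E a := by
      intro i hi
      by_contra hcon
      push Not at hcon
      have : ∑ i ∈ A, ∑ a, (if i ∈ E a then (1:ℝ) else 0) < ∑ i ∈ A, (1:ℝ) := by
        apply Finset.sum_lt_sum (fun i _ => adm_sum_le hE i 1 zero_le_one)
        exact ⟨i, hi, by simp [hcon]⟩
      have h3 := Finset.sum_le_sum (s := Finset.univ) (fun a _ => H.ind_le (A ∩ E a))
      simp at this
      simp only [Finset.sum_boole] at this hsum
      linarith
    have huni : ∀ a, ∀ p ∈ A, ∀ q ∈ A, p ∈ E a → q ∈ E a → p = q := by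
      intro a p hp q hq hpa hqa
      by_contra hpq
      have : ∑ a, ‖ind e (A ∩ E a)‖ < ∑ a, ((A ∩ E a).card : ℝ) := by
        apply Finset.sum_lt_sum (fun a _ => H.ind_le _)
        exact ⟨a, Finset.mem_univ _, H.ind_lt _ p q (Finset.mem_inter.mpr ⟨hp, hpa⟩)
          (Finset.mem_inter.mpr ⟨hq, hqa⟩) hpq⟩
      linarith
    have hd : A.Nonempty := Finset.card_pos.mp (by omega)
    have hfd : Nonempty (Fin d) := ⟨(hcov _ hd.choose_spec).choose⟩
    choose! t ht using hcov
    obtain ⟨μ, hμ, hS⟩ := hE.2.2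
    obtain ⟨m, rfl⟩ : ∃ m, n = m + 1 := ⟨n - 1, by have := H.hn; omega⟩
    apply sch_spread m _ A (fun a => if h : a ∈ A then μ (t a) else 1) hS
    · intro g hg
      simp only [hg, dif_pos]
      exact Finset.mem_image_of_mem _ (Finset.mem_univ _)
    · intro g hg g' hg' hlt
      simp only [hg, hg', dif_pos]
      have : t g < t g' := by
        rcases lt_trichotomy (t g) (t g') with h | h | h
        · exact h
        · have := huni (t g) g hg g' hg' (ht g hg) (h ▸ ht g' hg')
          exact absurd this hlt.ne
        · exact absurd (hE.2.1 _ _ h _ (ht g' hg') _ (ht g hg)) (not_lt.mpr hlt.le)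
      exact hE.2.1 _ _ this _ (hμ _).1 _ (hμ _).1
    · intro g hg
      simp only [hg, dif_pos]
      exact (hμ _).2 (ht g hg)

theorem lin_diag (H : TG θ k n e c) (T : X ≃ₗᵢ[ℝ] X) (hT : T (e 1) = e 1) :
    ∃ η : ℕ+ → ℝ, (∀ i, η i = 1 ∨ η i = -1) ∧ ∀ x i, c (T x) i = η i * c x i := by
  choose σ η hη hσ using fun i => H.B2 T.symm i
  choose τ ζ hζ hτ using fun i => H.B2 T i
  simp only [LinearIsometryEquiv.symm_symm] at hσ
  have h1 : ∀ i, σ (τ i) = i := by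
    intro i
    have := hτ i (T (e i))
    rw [LinearIsometryEquiv.symm_apply_apply, hσ, H.c_e, H.c_e, if_pos rfl] at this
    by_contra hcon
    rw [if_neg hcon] at this
    simp at this
  have h2 : ∀ i, τ (σ i) = i := by
    intro i
    have := hσ i (T.symm (e i))
    rw [LinearIsometryEquiv.apply_symm_apply, hτ, H.c_e, H.c_e, if_pos rfl] at this
    by_contra hcon
    rw [if_neg hcon] at this
    simp at this
  let sg : Equiv.Perm ℕ+ := ⟨σ, τ, h2, h1⟩
  have hid := perm_id n H.hn k sg (by
    change σ 1 = 1
    have := hσ 1 (e 1)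
    rw [hT, H.c_e, H.c_e, if_pos rfl] at this
    by_contra hcon
    rw [if_neg hcon] at this
    simp at this) (by
    intro A _ hk hA
    have hinj : Function.Injective sg := sg.injective
    have hc : (A.image sg).card = A.card := Finset.card_image_of_injective _ hinj
    apply H.ind_mem
    · rw [hc]; exact hk
    · rw [hc]
      have e1 : θ * A.card ≤ ‖ind e A‖ := by
        refine le_trans (le_of_eq ?_) (H.lowA (ind e A) A hA)
        congr 1
        rw [Finset.sum_congr rfl (g := fun _ => (1:ℝ))]
        · simp
        · intro i hi; rw [H.c_ind, if_pos hi, abs_one]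
      refine e1.trans ?_
      rw [← LinearIsometryEquiv.norm_map T (ind e (A.image sg))]
      apply H.mono
      intro i
      rw [hσ, H.c_ind, H.c_ind]
      have : σ i ∈ A.image sg ↔ i ∈ A := by
        rw [Finset.mem_image]
        constructor
        · rintro ⟨a, ha, h⟩
          have : a = i := hinj h
          rw [← this]; exact ha
        · intro h; exact ⟨i, h, rfl⟩
      by_cases hi : i ∈ A
      · rw [if_pos hi, if_pos (this.mpr hi)]
        rcases hη i with h | h <;> rw [h] <;> simp
      · rw [if_neg hi]; simp)
  refine ⟨η, hη, ?_⟩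
  intro x i
  rw [hσ]
  have : σ i = i := hid i
  rw [this]

end TG
end


/-- mutually inverse isometries of the sphere -/
structure SI {X : Type*} [NormedAddCommGroup X] (U V : X → X) : Prop where
  us : ∀ x, ‖x‖ = 1 → ‖U x‖ = 1
  vs : ∀ x, ‖x‖ = 1 → ‖V x‖ = 1
  vu : ∀ x, ‖x‖ = 1 → V (U x) = x
  uv : ∀ x, ‖x‖ = 1 → U (V x) = x
  iso : ∀ x y, ‖x‖ = 1 → ‖y‖ = 1 → ‖U x - U y‖ = ‖x - y‖

theorem SI.symm {X : Type*} [NormedAddCommGroup X] {U V : X → X} (h : SI U V) : SI V U where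
  us := h.vs
  vs := h.us
  vu := h.uv
  uv := h.vu
  iso := by
    intro x y hx hy
    rw [← h.iso _ _ (h.vs x hx) (h.vs y hy), h.uv x hx, h.uv y hy]

theorem sgn_ex (r : ℝ) : ∃ s : ℝ, (s = 1 ∨ s = -1) ∧ s * r = |r| := by
  rcases le_total 0 r with h | h
  · exact ⟨1, Or.inl rfl, by rw [abs_of_nonneg h, one_mul]⟩
  · exact ⟨-1, Or.inr rfl, by rw [abs_of_nonpos h]; ring⟩

theorem pm_abs {s : ℝ} (h : s = 1 ∨ s = -1) : |s| = 1 := by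
  rcases h with h | h <;> rw [h] <;> simp

theorem pm_mul {s : ℝ} (h : s = 1 ∨ s = -1) : s * s = 1 := by
  rcases h with h | h <;> rw [h] <;> norm_num

theorem sgn_add {s r : ℝ} (h : s = 1 ∨ s = -1) (h2 : s * r = |r|) : |r + s| = 1 + |r| := by
  have h0 := abs_nonneg r
  rcases h with h | h
  · subst h
    rw [abs_of_nonneg (by linarith)]; linarith
  · subst h
    rw [abs_of_nonpos (by linarith)]; linarith

section
variable {X : Type*} [NormedAddCommGroup X] [NormedSpace ℝ X]
variable {θ : ℝ} {k n : ℕ} {e : ℕ+ → X} {c : X →ₗ[ℝ] (ℕ+ → ℝ)}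

/-- remove the first coordinate -/
def RR (e : ℕ+ → X) (c : X →ₗ[ℝ] (ℕ+ → ℝ)) (x : X) : X := x - c x 1 • e 1

namespace TG

theorem cR (H : TG θ k n e c) (x : X) (i : ℕ+) : c (RR e c x) i = if i = 1 then 0 else c x i := by
  simp only [RR, map_sub, map_smul, Pi.sub_apply, Pi.smul_apply, H.c_e, smul_eq_mul]
  by_cases h : i = 1
  · subst h; simp
  · simp [h]

theorem R_le (H : TG θ k n e c) (x : X) : ‖RR e c x‖ ≤ ‖x‖ := by
  apply H.mono; intro i; rw [H.cR]; split_ifs <;> simp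

theorem nR (H : TG θ k n e c) (x : X) : ‖x‖ = max |c x 1| ‖RR e c x‖ := by
  rw [← H.M (c x 1) (RR e c x) (by rw [H.cR, if_pos rfl])]
  congr 1; unfold RR; abel

theorem P5 (H : TG θ k n e c) (y : X) (hy : ‖y‖ = 1) : ‖e 1 - y‖ ≤ 1 ∨ ‖-e 1 - y‖ ≤ 1 := by
  have h1 := abs_le.mp ((H.coord y 1).trans hy.le)
  have hR := (H.R_le y).trans hy.le
  rcases le_total 0 (c y 1) with h | h
  · left
    have : e 1 - y = (1 - c y 1) • e 1 + (-RR e c y) := by unfold RR; module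
    rw [this, H.M _ _ (by simp [H.cR]), norm_neg]
    apply max_le _ hR
    rw [abs_le]; constructor <;> linarith
  · right
    have : -e 1 - y = (-1 - c y 1) • e 1 + (-RR e c y) := by unfold RR; module
    rw [this, H.M _ _ (by simp [H.cR]), norm_neg]
    apply max_le _ hR
    rw [abs_le]; constructor <;> linarith

theorem coord_sub (H : TG θ k n e c) (x y : X) (j : ℕ+) : |c x j - c y j| ≤ ‖x - y‖ := by
  have := H.coord (x - y) j
  simpa using this

theorem npair (H : TG θ k n e c) (a b : ℝ) (ha : a = 1 ∨ a = -1) (hb : b = 1 ∨ b = -1) (i j : ℕ+)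
    (hij : i ≠ j) : ‖a • e i + b • e j‖ = 1 := by
  apply le_antisymm (H.pair a b (pm_abs ha).le (pm_abs hb).le i j hij)
  have := H.coord (a • e i + b • e j) i
  rw [H.cpair, if_pos rfl, if_neg hij, add_zero, pm_abs ha] at this
  exact this

theorem far (k : ℕ) (j : ℕ+) : ∃ A : Finset ℕ+, A.card = k ∧ ∀ a ∈ A, j < a ∧ k ≤ (a:ℕ) := by
  refine ⟨(Finset.range k).image (fun t : ℕ => Nat.succPNat ((j:ℕ) + k + t)), ?_, ?_⟩
  · rw [Finset.card_image_of_injective, Finset.card_range]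
    intro s t h
    have h2 := Nat.succPNat_injective h
    omega
  · intro a ha
    obtain ⟨t, _, rfl⟩ := Finset.mem_image.mp ha
    constructor
    · rw [← PNat.coe_lt_coe, Nat.succPNat_coe]; omega
    · rw [Nat.succPNat_coe]; omega

theorem e1_step1 (H : TG θ k n e c) (x x' : X) (hx : ‖x‖ = 1) (hx' : ‖x'‖ = 1)
    (h : ∀ v, ‖v‖ = 1 → ‖x - v‖ ≤ 1 ∨ ‖x' - v‖ ≤ 1) (j l : ℕ+) (hjl : j ≠ l)
    (h1 : c x j ≠ 0) (h2 : c x' l ≠ 0) : False := by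
  obtain ⟨s, hs, hs'⟩ := sgn_ex (c x j)
  obtain ⟨t, ht, ht'⟩ := sgn_ex (c x' l)
  have hv := H.npair s t hs ht j l hjl
  have hv' : ‖-(s • e j + t • e l)‖ = 1 := by rw [norm_neg]; exact hv
  have p1 := abs_pos.mpr h1
  have p2 := abs_pos.mpr h2
  rcases h _ hv' with h | h
  · have := H.coord_sub x (-(s • e j + t • e l)) j
    rw [map_neg, Pi.neg_apply, H.cpair, if_pos rfl, if_neg hjl, add_zero, sub_neg_eq_add,
      sgn_add hs hs'] at this
    linarith
  · have := H.coord_sub x' (-(s • e j + t • e l)) l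
    rw [map_neg, Pi.neg_apply, H.cpair, if_pos rfl, if_neg (Ne.symm hjl), zero_add, sub_neg_eq_add,
      sgn_add ht ht'] at this
    linarith

theorem far_dist (H : TG θ k n e c) (x : X) (j : ℕ+) (hj : j ≠ 1) (hxj : c x j ≠ 0)
    (A : Finset ℕ+) (hA : A.card = k) (hA' : ∀ a ∈ A, j < a ∧ k ≤ (a:ℕ)) (h0 : ∀ a ∈ A, c x a = 0) :
    1 < ‖x - ind e A‖ := by
  have hj2 : (2:ℕ+) ≤ j := by
    rw [← PNat.coe_le_coe]
    have h1 := j.pos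
    have : (j:ℕ) ≠ 1 := fun h => hj (PNat.eq h)
    change 2 ≤ (j:ℕ)
    omega
  have hS := sch_cons n H.hn j hj2 A (fun a ha => (hA' a ha).1) (fun a ha => by
    rw [hA]; exact (hA' a ha).2)
  have hjA : j ∉ A := fun h => lt_irrefl _ (hA' j h).1
  have := H.lowA (x - ind e A) _ hS
  rw [Finset.sum_insert hjA] at this
  have e1 : |c (x - ind e A) j| = |c x j| := by
    rw [map_sub, Pi.sub_apply, H.c_ind, if_neg hjA, sub_zero]
  have e2 : ∑ a ∈ A, |c (x - ind e A) a| = k := by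
    rw [Finset.sum_congr rfl (g := fun _ => (1:ℝ))]
    · simp [hA]
    · intro a ha
      rw [map_sub, Pi.sub_apply, H.c_ind, if_pos ha, h0 a ha]; simp
  rw [e1, e2] at this
  have p1 := abs_pos.mpr hxj
  have := H.hθ
  have := H.h0
  nlinarith

theorem e1_step2 (H : TG θ k n e c) (x x' : X) (hx : ‖x‖ = 1) (hx' : ‖x'‖ = 1)
    (h : ∀ v, ‖v‖ = 1 → ‖x - v‖ ≤ 1 ∨ ‖x' - v‖ ≤ 1) (j : ℕ+) (hj : j ≠ 1)
    (h1 : c x j ≠ 0) (h2 : c x' j ≠ 0) : False := by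
  obtain ⟨A, hA, hA'⟩ := far k j
  have hAn : A.Nonempty := Finset.card_pos.mp (by have := H.hk; omega)
  have hne : ∀ a ∈ A, a ≠ j := fun a ha h => by
    have := (hA' a ha).1; rw [h] at this; exact lt_irrefl _ this
  have hv : ‖ind e A‖ = 1 := by
    apply le_antisymm
    · apply H.l1k _ A
      · intro i hi; rw [H.c_ind, if_neg hi]
      · intro i; rw [H.c_ind]; split_ifs <;> simp
      · exact hA.le
    · obtain ⟨a, ha⟩ := hAn
      have := H.coord (ind e A) a
      rw [H.c_ind, if_pos ha, abs_one] at this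
      exact this
  have z1 : ∀ a ∈ A, c x a = 0 := by
    intro a ha
    by_contra hcon
    exact H.e1_step1 x x' hx hx' h a j (hne a ha) hcon h2
  have z2 : ∀ a ∈ A, c x' a = 0 := by
    intro a ha
    by_contra hcon
    exact H.e1_step1 x x' hx hx' h j a (Ne.symm (hne a ha)) h1 hcon
  have d1 := H.far_dist x j hj h1 A hA hA' z1
  have d2 := H.far_dist x' j hj h2 A hA hA' z2
  rcases h _ hv with h | h <;> linarith

theorem only1 (H : TG θ k n e c) (x : X) (hx : ‖x‖ = 1) (h : ∀ j, j ≠ 1 → c x j = 0) :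
    ∃ δ : ℝ, (δ = 1 ∨ δ = -1) ∧ x = δ • e 1 := by
  have he : x = c x 1 • e 1 := by
    apply H.ext
    intro i
    rw [map_smul, Pi.smul_apply, H.c_e]
    by_cases hi : i = 1
    · subst hi; simp
    · simp [hi, h i hi]
  refine ⟨c x 1, ?_, he⟩
  rw [he, norm_smul, H.norm_e, mul_one] at hx
  exact (abs_eq zero_le_one).mp hx

theorem e1_step3 (H : TG θ k n e c) (x x' : X) (hx : ‖x‖ = 1) (hx' : ‖x'‖ = 1)
    (h : ∀ v, ‖v‖ = 1 → ‖x - v‖ ≤ 1 ∨ ‖x' - v‖ ≤ 1) (hd : ‖x - x'‖ = 2)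
    (h0 : ∀ j, j ≠ 1 → c x j = 0) :
    ∃ δ : ℝ, (δ = 1 ∨ δ = -1) ∧ x = δ • e 1 ∧ x' = -(δ • e 1) := by
  obtain ⟨δ, hδ, hxe⟩ := H.only1 x hx h0
  have h0' : ∀ j, j ≠ 1 → c x' j = 0 := by
    intro j hj
    by_contra hcon
    obtain ⟨t, ht, ht'⟩ := sgn_ex (c x' j)
    have hv := H.npair δ t hδ ht 1 j (Ne.symm hj)
    have hv' : ‖-(δ • e 1 + t • e j)‖ = 1 := by rw [norm_neg]; exact hv
    have p2 := abs_pos.mpr hcon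
    rcases h _ hv' with h | h
    · have := H.coord_sub x (-(δ • e 1 + t • e j)) 1
      rw [map_neg, Pi.neg_apply, H.cpair, if_pos rfl, if_neg (Ne.symm hj), add_zero, sub_neg_eq_add,
        hxe, map_smul, Pi.smul_apply, H.c_e, if_pos rfl, smul_eq_mul, mul_one] at this
      rw [hxe] at h
      have this2 := this.trans h
      rcases hδ with hh | hh <;> rw [hh] at this2 <;> norm_num at this2
    · have := H.coord_sub x' (-(δ • e 1 + t • e j)) j
      rw [map_neg, Pi.neg_apply, H.cpair, if_pos rfl, if_neg hj, zero_add, sub_neg_eq_add,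
        sgn_add ht ht'] at this
      linarith
  obtain ⟨δ', hδ', hxe'⟩ := H.only1 x' hx' h0'
  refine ⟨δ, hδ, hxe, ?_⟩
  rw [hxe, hxe'] at hd
  rcases hδ with h | h <;> rcases hδ' with h' | h' <;> rw [h, h'] at hd <;> rw [hxe', h, h']
  · simp at hd
  · simp
  · simp
  · simp at hd

theorem e1 (H : TG θ k n e c) (U V : X → X) (hS : SI U V) :
    ∃ δ : ℝ, (δ = 1 ∨ δ = -1) ∧ ∀ s : ℝ, (s = 1 ∨ s = -1) → U (s • e 1) = (δ * s) • e 1 := by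
  have n1 := H.norm_e 1
  have n2 : ‖-e 1‖ = 1 := by rw [norm_neg]; exact n1
  have hx := hS.us _ n1
  have hx' := hS.us _ n2
  have h : ∀ v, ‖v‖ = 1 → ‖U (e 1) - v‖ ≤ 1 ∨ ‖U (-e 1) - v‖ ≤ 1 := by
    intro v hv
    have hy := hS.vs v hv
    have := H.P5 (V v) hy
    rw [← hS.iso _ _ n1 hy, ← hS.iso _ _ n2 hy, hS.uv v hv] at this
    exact this
  have hd : ‖U (e 1) - U (-e 1)‖ = 2 := by
    rw [hS.iso _ _ n1 n2, sub_neg_eq_add, ← two_smul ℝ, norm_smul, n1]; norm_num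
  have main : ∃ δ : ℝ, (δ = 1 ∨ δ = -1) ∧ U (e 1) = δ • e 1 ∧ U (-e 1) = -(δ • e 1) := by
    by_cases h0 : ∀ j, j ≠ 1 → c (U (e 1)) j = 0
    · exact H.e1_step3 _ _ hx hx' h hd h0
    · push Not at h0
      obtain ⟨j, hj, hcj⟩ := h0
      have h0' : ∀ l, l ≠ 1 → c (U (-e 1)) l = 0 := by
        intro l hl
        by_contra hcon
        by_cases hjl : j = l
        · subst hjl; exact H.e1_step2 _ _ hx hx' h j hj hcj hcon
        · exact H.e1_step1 _ _ hx hx' h j l hjl hcj hcon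
      obtain ⟨δ, hδ, a1, a2⟩ := H.e1_step3 _ _ hx' hx (fun v hv => (h v hv).symm)
        (by rw [norm_sub_rev]; exact hd) h0'
      refine ⟨-δ, by rcases hδ with h | h <;> rw [h] <;> simp, ?_, ?_⟩
      · rw [a2]; simp
      · rw [a1]; simp
  obtain ⟨δ, hδ, a1, a2⟩ := main
  refine ⟨δ, hδ, ?_⟩
  rintro s (rfl | rfl)
  · simpa using a1
  · simpa using a2

end TG
end


section
variable {X : Type*} [NormedAddCommGroup X] [NormedSpace ℝ X]
variable {θ : ℝ} {k n : ℕ} {e : ℕ+ → X} {c : X →ₗ[ℝ] (ℕ+ → ℝ)}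

theorem RR_sub (x y : X) : RR e c (x - y) = RR e c x - RR e c y := by
  unfold RR; rw [map_sub, Pi.sub_apply]; module

namespace TG

theorem R_id (H : TG θ k n e c) (x : X) (h : c x 1 = 0) : RR e c x = x := by
  unfold RR; rw [h, zero_smul, sub_zero]

theorem face_iff (H : TG θ k n e c) (p : X) (hp : ‖p‖ = 1) (s : ℝ) (hs : s = 1 ∨ s = -1) :
    c p 1 = s ↔ ‖p - (-s) • e 1‖ = 2 := by
  have h1 : p - (-s) • e 1 = (c p 1 + s) • e 1 + RR e c p := by unfold RR; module
  rw [h1, H.M _ _ (by rw [H.cR, if_pos rfl])]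
  have h2 := (H.R_le p).trans hp.le
  have h3 := abs_le.mp ((H.coord p 1).trans hp.le)
  constructor
  · intro h
    rw [h]
    have : |s + s| = 2 := by rcases hs with h | h <;> rw [h] <;> norm_num
    rw [this]; exact max_eq_left (by linarith)
  · intro h
    have h4 : |c p 1 + s| = 2 := by
      rcases max_choice |c p 1 + s| ‖RR e c p‖ with h' | h'
      · rw [← h', h]
      · rw [h'] at h; linarith
    rcases hs with rfl | rfl
    · rcases (abs_eq (by norm_num)).mp h4 with h | h <;> linarith
    · rcases (abs_eq (by norm_num)).mp h4 with h | h <;> linarith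

theorem n_se (H : TG θ k n e c) (s : ℝ) (hs : s = 1 ∨ s = -1) : ‖s • e 1‖ = 1 := by
  rw [norm_smul, H.norm_e, mul_one]; exact pm_abs hs

theorem face_map (H : TG θ k n e c) {U V : X → X} (hS : SI U V) {δ : ℝ} (hδ : δ = 1 ∨ δ = -1)
    (hU : ∀ s : ℝ, (s = 1 ∨ s = -1) → U (s • e 1) = (δ * s) • e 1)
    (p : X) (hp : ‖p‖ = 1) (s : ℝ) (hs : s = 1 ∨ s = -1) (h : c p 1 = s) : c (U p) 1 = δ * s := by
  have hs' : -s = 1 ∨ -s = -1 := by rcases hs with h | h <;> rw [h] <;> simp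
  have hds : δ * s = 1 ∨ δ * s = -1 := by
    rcases hs with h | h <;> rcases hδ with h' | h' <;> rw [h, h'] <;> simp
  rw [H.face_iff (U p) (hS.us p hp) _ hds]
  rw [H.face_iff p hp s hs, ← hS.iso _ _ hp (H.n_se _ hs'), hU _ hs'] at h
  rw [← h]; congr 2; rw [mul_neg]

theorem e1_symm (H : TG θ k n e c) {U V : X → X} (hS : SI U V) {δ : ℝ} (hδ : δ = 1 ∨ δ = -1)
    (hU : ∀ s : ℝ, (s = 1 ∨ s = -1) → U (s • e 1) = (δ * s) • e 1) :
    ∀ s : ℝ, (s = 1 ∨ s = -1) → V (s • e 1) = (δ * s) • e 1 := by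
  intro s hs
  have hds : δ * s = 1 ∨ δ * s = -1 := by
    rcases hs with h | h <;> rcases hδ with h' | h' <;> rw [h, h'] <;> simp
  have := hU _ hds
  rw [← mul_assoc, pm_mul hδ, one_mul] at this
  rw [← this, hS.vu _ (H.n_se _ hds)]

/-- the face map extended to the ball -/
def GG (e : ℕ+ → X) (c : X →ₗ[ℝ] (ℕ+ → ℝ)) (U : X → X) (s : ℝ) (x : X) : X :=
  c x 1 • e 1 + RR e c (U (s • e 1 + RR e c x))

theorem lift_norm (H : TG θ k n e c) (s : ℝ) (hs : s = 1 ∨ s = -1) (x : X) (hx : ‖x‖ ≤ 1) :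
    ‖s • e 1 + RR e c x‖ = 1 := by
  rw [H.M _ _ (by rw [H.cR, if_pos rfl]), pm_abs hs]
  exact max_eq_left ((H.R_le x).trans hx)

theorem c_lift (H : TG θ k n e c) (s : ℝ) (x : X) (i : ℕ+) :
    c (s • e 1 + RR e c x) i = if i = 1 then s else c x i := by
  rw [map_add, Pi.add_apply, map_smul, Pi.smul_apply, H.c_e, H.cR]
  by_cases h : i = 1 <;> simp [h]

theorem c_G (H : TG θ k n e c) (U : X → X) (s : ℝ) (x : X) (i : ℕ+) :
    c (GG e c U s x) i = if i = 1 then c x 1 else c (U (s • e 1 + RR e c x)) i := by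
  unfold GG; rw [H.c_lift]

theorem G_inv (H : TG θ k n e c) {U V : X → X} (hS : SI U V) {δ : ℝ} (hδ : δ = 1 ∨ δ = -1)
    (hU : ∀ s : ℝ, (s = 1 ∨ s = -1) → U (s • e 1) = (δ * s) • e 1)
    (s : ℝ) (hs : s = 1 ∨ s = -1) (x : X) (hx : ‖x‖ ≤ 1) :
    GG e c V (δ * s) (GG e c U s x) = x := by
  have hp := H.lift_norm s hs x hx
  have hq := H.face_map hS hδ hU _ hp s hs (by rw [H.c_lift, if_pos rfl])
  have h1 : (δ * s) • e 1 + RR e c (GG e c U s x) = U (s • e 1 + RR e c x) := by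
    apply H.ext
    intro i
    rw [H.c_lift, H.c_G]
    by_cases h : i = 1
    · subst h; rw [if_pos rfl, hq]
    · rw [if_neg h, if_neg h]
  apply H.ext
  intro i
  rw [H.c_G, h1, hS.vu _ hp, H.c_lift, H.c_G, if_pos rfl]
  by_cases h : i = 1
  · subst h; simp
  · simp [h]

theorem G_BI (H : TG θ k n e c) {U V : X → X} (hS : SI U V) {δ : ℝ} (hδ : δ = 1 ∨ δ = -1)
    (hU : ∀ s : ℝ, (s = 1 ∨ s = -1) → U (s • e 1) = (δ * s) • e 1)
    (s : ℝ) (hs : s = 1 ∨ s = -1) : BI (GG e c U s) (GG e c V (δ * s)) := by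
  have hds : δ * s = 1 ∨ δ * s = -1 := by
    rcases hs with h | h <;> rcases hδ with h' | h' <;> rw [h, h'] <;> simp
  have hV := H.e1_symm hS hδ hU
  have hb : ∀ (U V : X → X) (_ : SI U V) (s : ℝ), (s = 1 ∨ s = -1) → ∀ x, ‖x‖ ≤ 1 →
      ‖GG e c U s x‖ ≤ 1 := by
    intro U V hS s hs x hx
    unfold GG
    rw [H.M _ _ (by rw [H.cR, if_pos rfl])]
    exact max_le ((H.coord x 1).trans hx)
      ((H.R_le _).trans (hS.us _ (H.lift_norm s hs x hx)).le)
  refine ⟨hb U V hS s hs, hb V U hS.symm _ hds, H.G_inv hS hδ hU s hs, ?_, ?_, ?_⟩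
  · intro x hx
    have := H.G_inv hS.symm hδ hV (δ * s) hds x hx
    rwa [← mul_assoc, pm_mul hδ, one_mul] at this
  · intro x y hx hy
    have hp := H.lift_norm s hs x hx
    have hp' := H.lift_norm s hs y hy
    have hq := H.face_map hS hδ hU _ hp s hs (by rw [H.c_lift, if_pos rfl])
    have hq' := H.face_map hS hδ hU _ hp' s hs (by rw [H.c_lift, if_pos rfl])
    have hi := hS.iso _ _ hp hp'
    set q := U (s • e 1 + RR e c x)
    set q' := U (s • e 1 + RR e c y)
    have h1 : GG e c U s x - GG e c U s y = c (x - y) 1 • e 1 + RR e c (q - q') := by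
      unfold GG
      rw [RR_sub, map_sub, Pi.sub_apply]; module
    have h2 : RR e c (q - q') = q - q' := H.R_id _ (by rw [map_sub, Pi.sub_apply, hq, hq', sub_self])
    rw [h1, H.M _ _ (by rw [H.cR, if_pos rfl]), h2, hi, H.nR (x - y), RR_sub]
    congr 2; abel
  · apply H.ext
    intro i
    have h0 : RR e c (0:X) = 0 := by simp [RR]
    rw [H.c_G, h0, add_zero, hU s hs]
    by_cases h : i = 1
    · subst h; simp
    · simp [h, H.c_e]

theorem face_diag (H : TG θ k n e c) {U V : X → X} (hS : SI U V) {δ : ℝ} (hδ : δ = 1 ∨ δ = -1)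
    (hU : ∀ s : ℝ, (s = 1 ∨ s = -1) → U (s • e 1) = (δ * s) • e 1)
    (s : ℝ) (hs : s = 1 ∨ s = -1) : ∃ η : ℕ+ → ℝ, (∀ i, η i = 1 ∨ η i = -1) ∧
      ∀ p, ‖p‖ = 1 → c p 1 = s → ∀ i, i ≠ 1 → c (U p) i = η i * c p i := by
  obtain ⟨T, hT⟩ := ball_MU (H.G_BI hS hδ hU s hs)
  have hTe : T (e 1) = e 1 := by
    rw [hT _ (H.norm_e 1).le]
    apply H.ext
    intro i
    have h0 : RR e c (e 1) = 0 := by simp [RR, H.c_e]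
    rw [H.c_G, h0, add_zero, hU s hs]
    by_cases h : i = 1
    · subst h; simp
    · simp [h, H.c_e]
  obtain ⟨η, hη, h⟩ := H.lin_diag T hTe
  refine ⟨η, hη, ?_⟩
  intro p hp hps i hi
  have h1 := h p i
  rw [hT p hp.le, H.c_G, if_neg hi] at h1
  rw [← h1]
  congr 2
  unfold RR; rw [hps]; abel_nf

theorem face_sign (H : TG θ k n e c) {U V : X → X} (hS : SI U V) {δ : ℝ} (hδ : δ = 1 ∨ δ = -1)
    (hU : ∀ s : ℝ, (s = 1 ∨ s = -1) → U (s • e 1) = (δ * s) • e 1)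
    (s : ℝ) (hs : s = 1 ∨ s = -1) (η : ℕ+ → ℝ) (hη : ∀ i, η i = 1 ∨ η i = -1)
    (h : ∀ p, ‖p‖ = 1 → c p 1 = s → ∀ i, i ≠ 1 → c (U p) i = η i * c p i)
    (j : ℕ+) (hj : j ≠ 1) : c (U (e j)) j = η j := by
  have hds : δ * s = 1 ∨ δ * s = -1 := by
    rcases hs with h | h <;> rcases hδ with h' | h' <;> rw [h, h'] <;> simp
  have hV := H.e1_symm hS hδ hU
  set v := U (e j) with hv
  have hvn : ‖v‖ = 1 := hS.us _ (H.norm_e j)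
  have hpn := H.npair s (-1) hs (Or.inr rfl) 1 j (Ne.symm hj)
  set p := s • e 1 + (-1:ℝ) • e j with hp
  have hcp : ∀ l, c p l = (if l = 1 then s else 0) + (if l = j then -1 else 0) := fun l => H.cpair _ _ _ _ _
  have hcp1 : c p 1 = s := by rw [hcp, if_pos rfl, if_neg (Ne.symm hj), add_zero]
  have hd : 2 ≤ ‖v - U p‖ := by
    rw [hv, hS.iso _ _ (H.norm_e j) hpn]
    have := H.coord_sub (e j) p j
    rw [hcp, H.c_e] at this
    simp [hj] at this
    norm_num at this
    exact this
  have hUp : U p = (δ * s) • e 1 + (-η j) • e j := by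
    apply H.ext
    intro l
    rw [H.cpair]
    by_cases hl : l = 1
    · subst hl
      rw [H.face_map hS hδ hU p hpn s hs hcp1]; simp [Ne.symm hj]
    · rw [h p hpn hcp1 l hl, hcp]
      by_cases hlj : l = j
      · subst hlj; simp [hl]
      · simp [hl, hlj]
  have hv1 := abs_le.mp ((H.coord v 1).trans hvn.le)
  have hvj := abs_le.mp ((H.coord v j).trans hvn.le)
  -- decomposition
  let y := RR e c v - c v j • e j
  have hy1 : c y 1 = 0 := by simp [y, H.cR, H.c_e, Ne.symm hj]
  have hyj : c y j = 0 := by simp [y, H.cR, H.c_e, hj]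
  have hyn : ‖y‖ ≤ 1 := by
    rw [← hvn]
    apply H.mono
    intro l
    simp only [y, map_sub, map_smul, Pi.sub_apply, Pi.smul_apply, H.cR, H.c_e, smul_eq_mul]
    by_cases hl : l = 1
    · subst hl; simp [Ne.symm hj]
    · by_cases hlj : l = j
      · subst hlj; simp [hl]
      · simp [hl, hlj]
  have hdec : v - U p = (c v 1 - δ * s) • e 1 + ((c v j + η j) • e j + y) := by
    rw [hUp]; simp only [y, RR]; module
  rw [hdec, H.M _ _ (by simp [hy1, H.c_e, Ne.symm hj])] at hd
  have hlt : |c v 1 - δ * s| < 2 := by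
    by_contra hcon
    push Not at hcon
    have hv1' : c v 1 = -(δ * s) := by
      rcases hds with h | h <;> rw [h] at hcon ⊢ <;> rcases le_abs.mp hcon with h | h <;> linarith
    have hms : -(δ * s) = 1 ∨ -(δ * s) = -1 := by rcases hds with h | h <;> rw [h] <;> simp
    have := H.face_map hS.symm hδ hV v hvn _ hms hv1'
    rw [hv, hS.vu _ (H.norm_e j), H.c_e, if_neg (Ne.symm hj)] at this
    have h2 : δ * -(δ * s) = -s := by
      have := pm_mul hδ
      linear_combination (-s) * this
    rw [h2] at this
    rcases hs with h | h <;> rw [h] at this <;> norm_num at this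
  have hd2 : 2 ≤ ‖(c v j + η j) • e j + y‖ := by
    rcases le_max_iff.mp hd with h | h
    · linarith
    · exact h
  have hd3 := hd2.trans (H.L _ j y hyj)
  have hhalf := H.half
  have h0 := H.h0
  have hab : 2 ≤ |c v j + η j| := by
    rcases le_max_iff.mp hd3 with h | h
    · exact h
    · have := abs_nonneg (c v j + η j)
      nlinarith
  rcases hη j with h | h <;> rw [h] at hab ⊢ <;> rcases le_abs.mp hab with h | h <;> linarith

theorem exists_eps (H : TG θ k n e c) {U V : X → X} (hS : SI U V) : ∃ ε : ℕ+ → ℝ,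
    (∀ i, ε i = 1 ∨ ε i = -1) ∧
    (∀ p, ‖p‖ = 1 → |c p 1| = 1 → ∀ i, c (U p) i = ε i * c p i) ∧
    (∀ p, ‖p‖ = 1 → |c p 1| = 1 → ∀ i, c (V p) i = ε i * c p i) := by
  obtain ⟨δ, hδ, hU⟩ := H.e1 U V hS
  have hV := H.e1_symm hS hδ hU
  obtain ⟨η, hη, hf⟩ := H.face_diag hS hδ hU 1 (Or.inl rfl)
  obtain ⟨ζ, hζ, hg⟩ := H.face_diag hS hδ hU (-1) (Or.inr rfl)
  have heq : ∀ j, j ≠ 1 → ζ j = η j := by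
    intro j hj
    rw [← H.face_sign hS hδ hU 1 (Or.inl rfl) η hη hf j hj,
      ← H.face_sign hS hδ hU (-1) (Or.inr rfl) ζ hζ hg j hj]
  let ε : ℕ+ → ℝ := fun i => if i = 1 then δ else η i
  have hε : ∀ i, ε i = 1 ∨ ε i = -1 := by
    intro i
    by_cases h : i = 1
    · simp only [ε, h, if_true]; exact hδ
    · simp only [ε, h, if_false]; exact hη i
  have hA : ∀ p, ‖p‖ = 1 → |c p 1| = 1 → ∀ i, c (U p) i = ε i * c p i := by
    intro p hp h1 i
    have hs := (abs_eq zero_le_one).mp h1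
    by_cases h : i = 1
    · subst h
      simp only [ε, if_true]
      exact H.face_map hS hδ hU p hp _ hs rfl
    · simp only [ε, h, if_false]
      rcases hs with hs | hs
      · exact hf p hp hs i h
      · rw [hg p hp hs i h, heq i h]
  refine ⟨ε, hε, hA, ?_⟩
  intro p hp h1 i
  have hs := (abs_eq zero_le_one).mp h1
  have hq := H.face_map hS.symm hδ hV p hp _ hs rfl
  have hq1 : |c (V p) 1| = 1 := by rw [hq, abs_mul, pm_abs hδ, one_mul, h1]
  have := hA (V p) (hS.vs p hp) hq1 i
  rw [hS.uv p hp] at this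
  rw [this, ← mul_assoc, pm_mul (hε i), one_mul]

theorem sign_lem (η ε t u : ℝ) (hη : η = 1 ∨ η = -1) (hε : ε = 1 ∨ ε = -1) (h1 : |t| ≤ |u|)
    (h2 : η * u = |u|) (h3 : 1 + |u| ≤ |t + η * ε|) : u = ε * t := by
  have a1 := abs_le.mp h1
  rw [← h2] at h3 a1
  rcases le_abs.mp h3 with h | h <;> rcases hη with rfl | rfl <;> rcases hε with rfl | rfl <;>
    linarith [a1.1, a1.2]

theorem lemC (H : TG θ k n e c) {U V : X → X} (hS : SI U V) (ε : ℕ+ → ℝ)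
    (hε : ∀ i, ε i = 1 ∨ ε i = -1)
    (hf : ∀ p, ‖p‖ = 1 → |c p 1| = 1 → ∀ i, c (U p) i = ε i * c p i)
    (x : X) (hx : ‖x‖ = 1) (j : ℕ+) (hle : |c x j| ≤ |c (U x) j|) : c (U x) j = ε j * c x j := by
  by_cases h0 : c (U x) j = 0
  · rw [h0, abs_zero] at hle
    rw [h0, abs_eq_zero.mp (le_antisymm hle (abs_nonneg _)), mul_zero]
  have hpos := abs_pos.mpr h0
  obtain ⟨η, hη, hη'⟩ := sgn_ex (c (U x) j)
  have hηε : η * ε j = 1 ∨ η * ε j = -1 := by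
    rcases hη with h | h <;> rcases hε j with h' | h' <;> rw [h, h'] <;> simp
  apply sign_lem η (ε j) _ _ hη (hε j) hle hη'
  have key : ∀ q, ‖q‖ = 1 → |c q 1| = 1 → c q j = -(η * ε j) → 1 + |c (U x) j| ≤ ‖x - q‖ := by
    intro q hq hq1 hqj
    have h1 := H.coord_sub (U x) (U q) j
    have h2 : ε j * -(η * ε j) = -η := by
      have := pm_mul (hε j)
      linear_combination (-η) * this
    rw [hf q hq hq1 j, hqj, h2, sub_neg_eq_add, sgn_add hη hη', hS.iso _ _ hx hq] at h1
    exact h1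
  have hRx := (H.R_le x).trans hx.le
  have hhalf := H.half
  have hth := H.h0
  by_cases hj : j = 1
  · subst hj
    have hm : -(η * ε 1) = 1 ∨ -(η * ε 1) = -1 := by rcases hηε with h | h <;> rw [h] <;> simp
    have h1 := key ((-(η * ε 1)) • e 1) (H.n_se _ hm) (by simp [H.c_e, pm_abs hη, pm_abs (hε 1)])
      (by simp [H.c_e])
    have h2 : x - (-(η * ε 1)) • e 1 = (c x 1 + η * ε 1) • e 1 + RR e c x := by unfold RR; module
    rw [h2, H.M _ _ (by rw [H.cR, if_pos rfl])] at h1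
    rcases le_max_iff.mp h1 with h | h
    · exact h
    · linarith
  · obtain ⟨a, ha, ha'⟩ := sgn_ex (c x 1)
    let W := RR e c x - c x j • e j
    have hW1 : c W 1 = 0 := by simp [W, H.cR, H.c_e, Ne.symm hj]
    have hWj : c W j = 0 := by simp [W, H.cR, H.c_e, hj]
    have hWn : ‖W‖ ≤ 1 := by
      rw [← hx]
      apply H.mono
      intro l
      simp only [W, map_sub, map_smul, Pi.sub_apply, Pi.smul_apply, H.cR, H.c_e, smul_eq_mul]
      by_cases hl : l = 1
      · subst hl; simp [Ne.symm hj]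
      · by_cases hlj : l = j
        · subst hlj; simp [hl]
        · simp [hl, hlj]
    let q := a • e 1 + ((-(η * ε j)) • e j + (1 - θ) • W)
    have hq1 : c q 1 = a := by simp [q, hW1, H.c_e, Ne.symm hj]
    have hqj : c q j = -(η * ε j) := by simp [q, hWj, H.c_e, hj]
    have hqn : ‖q‖ = 1 := by
      simp only [q]
      rw [H.M _ _ (by simp [hW1, H.c_e, Ne.symm hj]), pm_abs ha]
      apply max_eq_left
      refine (H.L _ j _ (by simp [hWj])).trans ?_
      rw [abs_neg, pm_abs hηε, norm_smul, Real.norm_of_nonneg (by linarith)]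
      apply max_le le_rfl
      nlinarith
    have h1 := key q hqn (by rw [hq1, pm_abs ha]) hqj
    have h2 : x - q = (c x 1 - a) • e 1 + ((c x j + η * ε j) • e j + θ • W) := by
      simp only [q, W, RR]; module
    rw [h2, H.M _ _ (by simp [hW1, H.c_e, Ne.symm hj])] at h1
    have hx1 := abs_le.mp ((H.coord x 1).trans hx.le)
    have ha1 : |c x 1 - a| ≤ 1 := by
      have h3 := abs_nonneg (c x 1)
      rw [← ha'] at h3
      rcases ha with rfl | rfl <;> rw [abs_le] <;> constructor <;> linarith
    rcases le_max_iff.mp h1 with h | h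
    · linarith
    · have h4 := h.trans (H.L _ j _ (by simp [hWj]))
      rcases le_max_iff.mp h4 with h | h
      · exact h
      · exfalso
        rw [norm_smul, Real.norm_of_nonneg hth.le] at h
        have h5 : |c x j + η * ε j| ≤ 1 + |c (U x) j| := by
          refine (abs_add_le _ _).trans ?_
          rw [pm_abs hηε]; linarith
        nlinarith

theorem final (H : TG θ k n e c) {U V : X → X} (hS : SI U V) : ∃ ε : ℕ+ → ℝ,
    (∀ i, ε i = 1 ∨ ε i = -1) ∧ ∀ x, ‖x‖ = 1 → ∀ i, c (U x) i = ε i * c x i := by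
  obtain ⟨ε, hε, hA, hB⟩ := H.exists_eps hS
  refine ⟨ε, hε, ?_⟩
  intro x hx j
  rcases le_total |c x j| |c (U x) j| with h | h
  · exact H.lemC hS ε hε hA x hx j h
  · have := H.lemC hS.symm ε hε hB (U x) (hS.us x hx) j (by rw [hS.vu x hx]; exact h)
    rw [hS.vu x hx] at this
    rw [this, ← mul_assoc, pm_mul (hε j), one_mul]

end TG
end

theorem main_thm
    (θ : ℝ) (hθ0 : 0 < θ) (k : ℕ) (hk : 2 ≤ k) (hθk : θ⁻¹ = (k : ℝ))
    (n : ℕ) (hn : 2 ≤ n)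
    (X : Type*) [NormedAddCommGroup X] [NormedSpace ℝ X] (e : ℕ+ → X)
    (hX : IsTsirelsonSpace θ n X e)
    (U : Metric.sphere (0 : X) 1 → Metric.sphere (0 : X) 1)
    (hU : Isometry U) (hUsurj : Function.Surjective U) :
    ∃ ε : ℕ+ → ℝ,
      (∀ i, ε i = 1 ∨ ε i = -1) ∧
      ∀ (x : Metric.sphere (0 : X) 1) (a : ℕ+ → ℝ),
        HasSum (fun i => a i • e i) (x : X) →
        HasSum (fun i => (ε i * a i) • e i) ((U x : X)) := by
  classical
  obtain ⟨c, H⟩ := exists_TG θ hθ0 k hk hθk n hn e hX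
  have hmem : ∀ x : X, ‖x‖ = 1 ↔ x ∈ Metric.sphere (0:X) 1 := fun x => by simp
  obtain ⟨V, hV⟩ := hUsurj.hasRightInverse
  have hV' : ∀ x, V (U x) = x := fun x => hU.injective (hV (U x))
  let ext : (Metric.sphere (0 : X) 1 → Metric.sphere (0 : X) 1) → X → X := fun W x =>
    if h : ‖x‖ = 1 then W ⟨x, (hmem x).mp h⟩ else 0
  have hext : ∀ W x (h : ‖x‖ = 1), ext W x = W ⟨x, (hmem x).mp h⟩ := fun W x h => by
    simp only [ext, dif_pos h]
  have hn1 : ∀ W x, ‖x‖ = 1 → ‖ext W x‖ = 1 := fun W x h => by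
    rw [hext W x h]; exact (hmem _).mpr (Subtype.prop _)
  have hS : SI (ext U) (ext V) := by
    refine ⟨hn1 U, hn1 V, ?_, ?_, ?_⟩
    · intro x hx
      rw [hext V _ (hn1 U x hx)]
      have : (⟨ext U x, (hmem _).mp (hn1 U x hx)⟩ : Metric.sphere (0:X) 1) = U ⟨x, (hmem x).mp hx⟩ :=
        Subtype.ext (hext U x hx)
      rw [this, hV']
    · intro x hx
      rw [hext U _ (hn1 V x hx)]
      have : (⟨ext V x, (hmem _).mp (hn1 V x hx)⟩ : Metric.sphere (0:X) 1) = V ⟨x, (hmem x).mp hx⟩ :=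
        Subtype.ext (hext V x hx)
      rw [this, hV]
    · intro x y hx hy
      rw [hext U x hx, hext U y hy, ← dist_eq_norm, ← Subtype.dist_eq, hU.dist_eq, Subtype.dist_eq,
        dist_eq_norm]
  obtain ⟨ε, hε, h⟩ := H.final hS
  refine ⟨ε, hε, ?_⟩
  intro x a ha
  have hxn : ‖(x:X)‖ = 1 := (hmem _).mpr x.2
  have h1 := H.huniq _ a ha
  have h2 := H.hs (U x : X)
  have h3 := h x hxn
  rw [hext U x hxn] at h3
  have h4 : (U ⟨(x:X), (hmem _).mp hxn⟩ : X) = U x := rfl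
  rw [h4] at h3
  simp only [h3] at h2
  rw [h1]; exact h2

/-- For integer `θ⁻¹ ≥ 2` and `n ≥ 2`, every surjective isometry of the
unit sphere of `T[θ, S_n]` acts on basis expansions by `∑ aᵢ eᵢ ↦ ∑ εᵢ aᵢ eᵢ`. -/
theorem tsirelson_sphere_isometry_form_Sn
    (θ : ℝ) (hθ0 : 0 < θ) (k : ℕ) (hk : 2 ≤ k) (hθk : θ⁻¹ = (k : ℝ))
    (n : ℕ) (hn : 2 ≤ n)
    (X : Type*) [NormedAddCommGroup X] [NormedSpace ℝ X] (e : ℕ+ → X)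
    (hX : IsTsirelsonSpace θ n X e)
    (U : Metric.sphere (0 : X) 1 → Metric.sphere (0 : X) 1)
    (hU : Isometry U) (hUsurj : Function.Surjective U) :
    ∃ ε : ℕ+ → ℝ,
      (∀ i, ε i = 1 ∨ ε i = -1) ∧
      ∀ (x : Metric.sphere (0 : X) 1) (a : ℕ+ → ℝ),
        HasSum (fun i => a i • e i) (x : X) →
        HasSum (fun i => (ε i * a i) • e i) ((U x : X)) := by
  
  exact main_thm θ hθ0 k hk hθk n hn X e hX U hU hUsurj
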